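/- arXiv:1710.11219 — 6 statements merged into one kernel-verified Lean document; each statement's English description precedes it below -/
import Mathlib

section
/- For every ℓ ≥ 1 and every coloring c : 2^{<ω} → {0,…,ℓ−1} of the finite binary strings, there exists an infinite ordered variable word over {0,1}, encoded by b : ℕ → {0,1} and nonempty finite sets F_1 < F_2 < ⋯, and a color j < ℓ such that c(W(a)) = j for every k ≥ 0 and every a ∈ {0,1}^k. (The Ordered Variable Word theorem OVW(2,ℓ) for the binary alphabet.) -/
/- Binary strings are `List Bool`, with `false` playing the role of the bit `0`
and `true` the role of the bit `1`. -/

/-- `flipStr σ F` is the binary string of length `|σ|` obtained from `σ` by flipping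
the bit at each position `i ∈ F` with `i < |σ|`. -/
def flipStr (σ : List Bool) (F : Finset ℕ) : List Bool :=
  σ.mapIdx fun i b => if i ∈ F then !b else b

/-- `FinLT A B` says every element of `A` is less than every element of `B`. -/
def FinLT (A B : Finset ℕ) : Prop := ∀ x ∈ A, ∀ y ∈ B, x < y

/-- The instantiation `W(a)` of the infinite ordered variable word encoded by
`b : ℕ → Bool` and `F : ℕ → Finset ℕ` (where `F k` is the set of positions of the
`(k+1)`-st variable): the binary string of length `min (F a.length)` whose `n`-th bit
is `a i` if `n ∈ F i` for some `i < a.length`, and `b n` otherwise. -/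
noncomputable def instWord (b : ℕ → Bool) (F : ℕ → Finset ℕ) (a : List Bool) : List Bool :=
  (List.range (sInf (↑(F a.length) : Set ℕ))).map fun n =>
    if h : ∃ i, i < a.length ∧ n ∈ F i then a.getD (Nat.find h) false else b n

/-!
Let `V` be the semigroup of words over the alphabet and one variable, and `φ a : V → S` the
substitution of the letter `a`, onto the semigroup `S` of constant words. Multiplying by a minimal
element `e` of `βS` yields an idempotent ultrafilter `q` on `V`, concentrated on words that begin
with the variable, whose images satisfy `φ a (q) * φ b (q) = φ a (q)` for all letters `a`, `b`:
each `φ b (q)` lies in the minimal left ideal `βS * e`, so being idempotent it fixes `e` from the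
right. Hence, if `C` is the color class of `q`-almost every `φ a v`, a word of `C` that can be
extended inside `C` by `φ a v` for every letter `a` and almost every `v` stays such a word after
almost every extension. Choosing the extending words one after the other, each good for the
finitely many instantiations obtained so far, gives the infinite variable word; its `k`-th variable
starts the `k`-th chosen word, which makes the instantiation stop exactly where that word begins.
-/

open Filter Function

attribute [local instance] Ultrafilter.mul Ultrafilter.semigroup

-- Zorn's lemma for `z * x ≤ x`: by compactness the left ideals `M * x`, for `x` in a chain, have
-- a common element, and a minimal `e` generates a minimal left ideal.
theorem exists_forall_exists_mul_mul_eq_self {M : Type*} [Nonempty M] [Semigroup M]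
    [TopologicalSpace M] [CompactSpace M] [T2Space M]
    (continuous_mul_right : ∀ r : M, Continuous (· * r)) :
    ∃ e : M, ∀ x, ∃ y, y * (x * e) = e := by
  suffices ∃ e : M, ∀ x, (∃ z, z * e = x) → ∃ y, y * x = e by
    obtain ⟨e, he⟩ := this
    exact ⟨e, fun x => he (x * e) ⟨x, rfl⟩⟩
  refine exists_maximal_of_chains_bounded (r := fun x y : M => ∃ z, z * x = y)
    (fun C hC => ?_) ?_
  · rcases C.eq_empty_or_nonempty with rfl | hne
    · exact ⟨Classical.arbitrary M, by simp⟩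
    have : Nonempty C := hne.to_subtype
    have range_subset {x y : M} (h : ∃ z, z * x = y) :
        Set.range (· * y) ⊆ Set.range (· * x) := by
      obtain ⟨z, rfl⟩ := h
      rintro _ ⟨u, rfl⟩
      exact ⟨u * z, mul_assoc u z x⟩
    have directed : Directed (· ⊇ ·) fun x : C => Set.range (· * (x : M)) := by
      intro x y
      rcases eq_or_ne x y with rfl | hxy
      · exact ⟨x, subset_rfl, subset_rfl⟩
      · rcases hC x.2 y.2 (Subtype.coe_ne_coe.2 hxy) with h | h
        · exact ⟨y, range_subset h, subset_rfl⟩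
        · exact ⟨x, subset_rfl, range_subset h⟩
    have compact (x : C) : IsCompact (Set.range (· * (x : M))) :=
      isCompact_range (continuous_mul_right x)
    obtain ⟨m, hm⟩ := IsCompact.nonempty_iInter_of_directed_nonempty_isCompact_isClosed _
      directed (fun _ => Set.range_nonempty _) compact (fun x => (compact x).isClosed)
    exact ⟨m, fun x hx => Set.mem_iInter.1 hm ⟨x, hx⟩⟩
  · rintro x _ _ ⟨z, rfl⟩ ⟨u, rfl⟩
    exact ⟨u * z, mul_assoc u z x⟩

section UltrafilterMul

variable {S V : Type*} [Mul S] [Mul V]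

theorem ultrafilter_map_mul (f : V →ₙ* S) (p q : Ultrafilter V) :
    (p * q).map f = p.map f * q.map f := by
  refine Ultrafilter.coe_inj.mp (Filter.ext' fun P => ?_)
  change (∀ᶠ x in p, ∀ᶠ y in q, P (f (x * y))) ↔ ∀ᶠ x in p, ∀ᶠ y in q, P (f x * f y)
  simp only [map_mul]

theorem mem_ultrafilter_mul_of_mem_left {R : Set V} (mul_mem : ∀ v ∈ R, ∀ x, v * x ∈ R)
    {p : Ultrafilter V} (hp : R ∈ p) (q : Ultrafilter V) : R ∈ p * q :=
  (Ultrafilter.eventually_mul p q (· ∈ R)).2 <|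
    mem_of_superset hp fun v hv => Eventually.of_forall (mul_mem v hv)

end UltrafilterMul

section UltrafilterSemigroup

variable {S V A : Type*} [Semigroup S] [Semigroup V]

theorem exists_idempotent_mul_right {R : Set V} (nonempty : R.Nonempty)
    (mul_mem : ∀ v ∈ R, ∀ x, v * x ∈ R) (e : Ultrafilter V) :
    ∃ u : Ultrafilter V, R ∈ u ∧ IsIdempotentElem (u * e) := by
  obtain ⟨r, hr⟩ := nonempty
  obtain ⟨_, ⟨u, hu, rfl⟩, idem⟩ := exists_idempotent_in_compact_subsemigroup
    Ultrafilter.continuous_mul_left ((· * e) '' {u : Ultrafilter V | R ∈ u})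
    ⟨_, pure r, Ultrafilter.mem_pure.2 hr, rfl⟩
    ((ultrafilter_isClosed_basic R).isCompact.image (Ultrafilter.continuous_mul_left e))
    (by
      rintro _ ⟨p, hp, rfl⟩ _ ⟨q, -, rfl⟩
      have hpe : R ∈ p * e := mem_ultrafilter_mul_of_mem_left mul_mem hp e
      exact ⟨p * e * q, mem_ultrafilter_mul_of_mem_left mul_mem hpe q, mul_assoc _ _ _⟩)
  exact ⟨u, hu, idem⟩

theorem exists_ultrafilter_map_mul_map_eq [Nonempty S] (φ : A → V →ₙ* S) {ι : S → V}
    (leftInverse : ∀ a, LeftInverse (φ a) ι) {R : Set V} (nonempty : R.Nonempty)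
    (mul_mem : ∀ v ∈ R, ∀ x, v * x ∈ R) :
    ∃ q : Ultrafilter V, R ∈ q ∧ ∀ a b, q.map (φ a) * q.map (φ b) = q.map (φ a) := by
  obtain ⟨e, he⟩ := exists_forall_exists_mul_mul_eq_self (M := Ultrafilter S)
    Ultrafilter.continuous_mul_left
  obtain ⟨u, hu, idem⟩ := exists_idempotent_mul_right nonempty mul_mem (e.map ι)
  have map_eq (a : A) : (u * e.map ι).map (φ a) = u.map (φ a) * e := by
    rw [ultrafilter_map_mul, Ultrafilter.map_map, (leftInverse a).comp_eq_id, Ultrafilter.map_id]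
  refine ⟨u * e.map ι, mem_ultrafilter_mul_of_mem_left mul_mem hu _, fun a b => ?_⟩
  have idem_map : IsIdempotentElem ((u * e.map ι).map (φ b)) := by
    rw [IsIdempotentElem, ← ultrafilter_map_mul, idem.eq]
  obtain ⟨y, hy⟩ : ∃ y, y * (u * e.map ι).map (φ b) = e := by
    simpa only [map_eq] using he (u.map (φ b))
  have e_mul : e * (u * e.map ι).map (φ b) = e := by
    nth_rw 1 [← hy]
    rw [mul_assoc, idem_map.eq, hy]
  rw [map_eq a, mul_assoc, e_mul]

end UltrafilterSemigroup

section StarSet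

variable {S V A : Type*} [Mul V]

/-- The elements `w` of `C` such that, for every `a`, `w * φ a v` is in `C` for `q`-almost all `v`.
This is the analogue, for a family of homomorphisms `φ a`, of the set `C⋆` used to build
monochromatic products from an idempotent ultrafilter. -/
def starSet [Mul S] (φ : A → V →ₙ* S) (q : Ultrafilter V) (C : Set S) : Set S :=
  {w | w ∈ C ∧ ∀ a, ∀ᶠ v in q, w * φ a v ∈ C}

theorem eventually_eventually_mul_mem [Mul S] {φ : A → V →ₙ* S} {q : Ultrafilter V} {C : Set S}
    {a b : A} (hq : q.map (φ a) * q.map (φ b) = q.map (φ a)) (h : ∀ᶠ v in q, φ a v ∈ C) :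
    ∀ᶠ v in q, ∀ᶠ v' in q, φ a v * φ b v' ∈ C := by
  have h' : C ∈ q.map (φ a) := h
  rwa [← hq] at h'

theorem starSet_nonempty [Mul S] [Finite A] {φ : A → V →ₙ* S} {q : Ultrafilter V} {C : Set S}
    (hq : ∀ a b, q.map (φ a) * q.map (φ b) = q.map (φ a)) {a : A}
    (h : ∀ᶠ v in q, φ a v ∈ C) : (starSet φ q C).Nonempty := by
  have h_star : ∀ᶠ v in q, φ a v ∈ starSet φ q C :=
    h.and (eventually_all.2 fun b => eventually_eventually_mul_mem (hq a b) h)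
  obtain ⟨v, hv⟩ := h_star.exists
  exact ⟨_, hv⟩

variable [Semigroup S] [Finite A] {φ : A → V →ₙ* S} {q : Ultrafilter V} {C : Set S}

theorem eventually_mul_mem_starSet
    (hq : ∀ a b, q.map (φ a) * q.map (φ b) = q.map (φ a)) {w : S}
    (hw : w ∈ starSet φ q C) (a : A) : ∀ᶠ v in q, w * φ a v ∈ starSet φ q C := by
  refine (hw.2 a).and (eventually_all.2 fun b => ?_)
  simpa only [Set.mem_preimage, mul_assoc] using
    eventually_eventually_mul_mem (C := (w * ·) ⁻¹' C) (hq a b) (hw.2 a)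

theorem exists_mem_forall_mul_mem_starSet
    (hq : ∀ a b, q.map (φ a) * q.map (φ b) = q.map (φ a)) {R : Set V} (hR : R ∈ q)
    {T : Set S} (finite : T.Finite) (hT : T ⊆ starSet φ q C) :
    ∃ v ∈ R, ∀ w ∈ T, ∀ a, w * φ a v ∈ starSet φ q C := by
  have h : ∀ᶠ v in q, ∀ w ∈ T, ∀ a, w * φ a v ∈ starSet φ q C :=
    (eventually_all_finite finite).2 fun w hw =>
      eventually_all.2 (eventually_mul_mem_starSet hq (hT hw))
  exact (Eventually.and hR h).exists

end StarSet

section Products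

variable {S V A : Type*} [Monoid S] [Finite A]

theorem exists_seq_forall_mul_prod_mem {f : A → V → S} {R : Set V} {P : Set S}
    (extend : ∀ T : Set S, T.Finite → T ⊆ P → ∃ v ∈ R, ∀ w ∈ T, ∀ a, w * f a v ∈ P)
    {w₀ : S} (hw₀ : w₀ ∈ P) :
    ∃ v : ℕ → V, (∀ k, v k ∈ R) ∧
      ∀ a : List A, w₀ * (a.mapIdx fun i t => f t (v i)).prod ∈ P := by
  let State := {T : Set S // T.Finite ∧ T ⊆ P}
  choose next next_mem mul_next_mem using fun T : State => extend T T.2.1 T.2.2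
  let step (T : State) : State :=
    ⟨Set.image2 (fun w a => w * f a (next T)) T Set.univ, T.2.1.image2 _ Set.finite_univ,
      Set.image2_subset_iff.2 fun w hw a _ => mul_next_mem T w hw a⟩
  let state (k : ℕ) : State :=
    step^[k] ⟨{w₀}, Set.finite_singleton w₀, Set.singleton_subset_iff.2 hw₀⟩
  have state_succ (k : ℕ) : state (k + 1) = step (state k) := iterate_succ_apply' _ _ _
  refine ⟨fun k => next (state k), fun k => next_mem _, fun a => (state a.length).2.2 ?_⟩
  induction a using List.reverseRecOn with
  | nil => simp [state]
  | append_singleton a t ih =>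
    rw [List.mapIdx_concat, List.prod_append, List.prod_singleton, ← mul_assoc,
      List.length_append, List.length_singleton, state_succ]
    exact Set.mem_image2_of_mem ih (Set.mem_univ t)

theorem exists_forall_color_mul_prod_eq [Semigroup V] [Nonempty A] {κ : Type*} [Finite κ]
    (φ : A → V →ₙ* S) {ι : S → V} (leftInverse : ∀ a, LeftInverse (φ a) ι)
    {R : Set V} (nonempty : R.Nonempty) (mul_mem : ∀ v ∈ R, ∀ x, v * x ∈ R) (c : S → κ) :
    ∃ (j : κ) (w₀ : S) (v : ℕ → V), (∀ k, v k ∈ R) ∧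
      ∀ a : List A, c (w₀ * (a.mapIdx fun i t => φ t (v i)).prod) = j := by
  obtain ⟨q, hR, hq⟩ := exists_ultrafilter_map_mul_map_eq φ leftInverse nonempty mul_mem
  obtain ⟨a₀⟩ := ‹Nonempty A›
  obtain ⟨j, hj⟩ : ∃ j, ∀ᶠ v in q, c (φ a₀ v) = j :=
    Ultrafilter.eventually_exists_iff.1 (Eventually.of_forall fun v => ⟨_, rfl⟩)
  obtain ⟨w₀, hw₀⟩ := starSet_nonempty (C := c ⁻¹' {j}) hq hj
  obtain ⟨v, hv, h⟩ := exists_seq_forall_mul_prod_mem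
    (fun _ finite hT => exists_mem_forall_mul_mem_starSet hq hR finite hT) hw₀
  exact ⟨j, w₀, v, hv, fun a => (h a).1⟩

end Products

section Concatenation

variable {β : Type*}

theorem exists_forall_map_range_length_eq {l : ℕ → List β}
    (isPrefix : ∀ k, l k <+: l (k + 1)) (strictMono : StrictMono fun k => (l k).length) :
    ∃ s : ℕ → β, ∀ k, (List.range (l k).length).map s = l k := by
  have isPrefix_of_le {i k : ℕ} (h : i ≤ k) : l i <+: l k :=
    Nat.le_induction (List.prefix_refl _) (fun k _ ih => ih.trans (isPrefix k)) k h
  refine ⟨fun n => (l (n + 1))[n]'(strictMono.le_apply (x := n + 1)), fun k => ?_⟩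
  refine List.ext_getElem (by simp) fun n _ hn => ?_
  rw [List.getElem_map, List.getElem_range]
  rcases le_total (n + 1) k with hk | hk
  exacts [(isPrefix_of_le hk).getElem _, ((isPrefix_of_le hk).getElem hn).symm]

theorem map_range_append_map_Ico (s : ℕ → β) {m n : ℕ} (h : m ≤ n) :
    (List.range m).map s ++ (List.Ico m n).map s = (List.range n).map s := by
  rw [← List.map_append, ← List.Ico.zero_bot, List.Ico.append_consecutive m.zero_le h,
    List.Ico.zero_bot]

theorem exists_infinite_concat (w : List β) {v : ℕ → List β} (hv : ∀ k, v k ≠ []) :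
    ∃ (s : ℕ → β) (p : ℕ → ℕ), StrictMono p ∧ (List.range (p 0)).map s = w ∧
      ∀ k, (List.Ico (p k) (p (k + 1))).map s = v k := by
  let l (k : ℕ) : List β := w ++ ((List.range k).map v).flatten
  have l_succ (k : ℕ) : l (k + 1) = l k ++ v k := by simp [l, List.range_succ]
  have strictMono : StrictMono fun k => (l k).length := strictMono_nat_of_lt_succ fun k => by
    simpa [l_succ] using List.length_pos_iff.2 (hv k)
  obtain ⟨s, hs⟩ := exists_forall_map_range_length_eq
    (fun k => l_succ k ▸ List.prefix_append _ _) strictMono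
  refine ⟨s, fun k => (l k).length, strictMono, by simpa [l] using hs 0, fun k => ?_⟩
  apply List.append_cancel_left (as := l k)
  rw [← l_succ, ← hs (k + 1), ← map_range_append_map_Ico s (strictMono k.lt_succ_self).le, hs k]

end Concatenation

section BlockWords

variable {α : Type*}

/-- The left variable words over `α`: words in the letters of `α` and one variable, encoded as
`none`, that begin with the variable. -/
def leftVariableWords (α : Type*) : Set (List (Option α)) :=
  {v | v.head? = some none}

/-- The word obtained from the variable word `v` by substituting `t` for the variable `none`. -/
def substVar (t : α) (v : List (Option α)) : List α :=
  v.map (·.getD t)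

/-- The constant word `w₀` followed by the blocks `v 0`, `v 1`, …, with the `i`-th letter of `a`
substituted for the variable of `v i`; there are as many blocks as letters in `a`. -/
def substBlocks (w₀ : List α) (v : ℕ → List (Option α)) (a : List α) : List α :=
  w₀ ++ (a.mapIdx fun i t => substVar t (v i)).flatten

theorem substBlocks_concat (w₀ : List α) (v : ℕ → List (Option α)) (a : List α) (t : α) :
    substBlocks w₀ v (a ++ [t]) = substBlocks w₀ v a ++ substVar t (v a.length) := by
  simp [substBlocks]

theorem exists_forall_color_substBlocks_eq [Finite α] [Nonempty α] {κ : Type*} [Finite κ]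
    (c : List α → κ) :
    ∃ (j : κ) (w₀ : List α) (v : ℕ → List (Option α)), (∀ k, v k ∈ leftVariableWords α) ∧
      ∀ a, c (substBlocks w₀ v a) = j := by
  let φ (t : α) : FreeMonoid (Option α) →ₙ* FreeMonoid α :=
    (FreeMonoid.map (·.getD t) : FreeMonoid (Option α) →* FreeMonoid α)
  have leftInverse (t : α) : LeftInverse (φ t) (FreeMonoid.map some) :=
    fun w => FreeMonoid.toList.injective (by simp [φ, comp_def])
  have mul_mem (v : FreeMonoid (Option α)) (hv : v.toList ∈ leftVariableWords α)
      (x : FreeMonoid (Option α)) : (v * x).toList ∈ leftVariableWords α := by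
    simp_all [leftVariableWords]
  obtain ⟨j, w₀, v, hv, h⟩ := exists_forall_color_mul_prod_eq φ leftInverse
    (R := {v | v.toList ∈ leftVariableWords α}) ⟨FreeMonoid.of none, rfl⟩ mul_mem
    (c ∘ FreeMonoid.toList)
  refine ⟨j, w₀.toList, fun k => (v k).toList, hv, fun a => (congrArg c ?_).trans (h a)⟩
  simp [substBlocks, substVar, φ, FreeMonoid.toList_prod, FreeMonoid.toList_map, comp_def,
    List.mapIdx_eq_zipIdx_map]

end BlockWords

section OrderedVariableWords

variable {α : Type*}

/-- The `n`-th letter of the instantiation at `a` of the variable word with constant letters `b`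
and variable positions `F`: the version of the letters of `instWord` for an arbitrary alphabet. -/
def instantiateLetter (b : ℕ → α) (F : ℕ → Finset ℕ) (a : List α) (n : ℕ) : α :=
  if h : ∃ i, i < a.length ∧ n ∈ F i then a[Nat.find h]'(Nat.find_spec h).1 else b n

/-- The instantiation `W(a)`, as in `instWord`, over an arbitrary alphabet. -/
noncomputable def instantiate (b : ℕ → α) (F : ℕ → Finset ℕ) (a : List α) : List α :=
  (List.range (sInf (F a.length : Set ℕ))).map (instantiateLetter b F a)

theorem instWord_eq_instantiate (b : ℕ → Bool) (F : ℕ → Finset ℕ) (a : List Bool) :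
    instWord b F a = instantiate b F a := by
  refine List.map_congr_left fun n _ => ?_
  unfold instantiateLetter
  split_ifs with h
  · exact List.getD_eq_getElem _ _ _
  · rfl

theorem instantiateLetter_of_forall_notMem {b : ℕ → α} {F : ℕ → Finset ℕ} {a : List α} {n : ℕ}
    (h : ∀ i < a.length, n ∉ F i) : instantiateLetter b F a n = b n :=
  dif_neg fun ⟨i, hi, hn⟩ => h i hi hn

theorem instantiateLetter_of_mem {b : ℕ → α} {F : ℕ → Finset ℕ}
    (disjoint : Pairwise (Disjoint on F)) {a : List α} {i n : ℕ} (hi : i < a.length)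
    (hn : n ∈ F i) : instantiateLetter b F a n = a[i] := by
  have h : ∃ i, i < a.length ∧ n ∈ F i := ⟨i, hi, hn⟩
  have find_eq : Nat.find h = i := by
    by_contra hne
    exact Finset.disjoint_left.1 (disjoint hne) (Nat.find_spec h).2 hn
  simp only [instantiateLetter, dif_pos h, find_eq]

theorem instantiateLetter_concat {b : ℕ → α} {F : ℕ → Finset ℕ}
    (disjoint : Pairwise (Disjoint on F)) (a : List α) (t : α) (n : ℕ) :
    instantiateLetter b F (a ++ [t]) n =
      if n ∈ F a.length then t else instantiateLetter b F a n := by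
  split_ifs with hn
  · simp [instantiateLetter_of_mem disjoint (a := a ++ [t]) (by simp) hn]
  by_cases h : ∃ i < a.length, n ∈ F i
  · obtain ⟨i, hi, hni⟩ := h
    rw [instantiateLetter_of_mem disjoint hi hni,
      instantiateLetter_of_mem disjoint (by simp; omega) hni, List.getElem_append_left hi]
  · push Not at h
    rw [instantiateLetter_of_forall_notMem h, instantiateLetter_of_forall_notMem]
    intro i hi
    rcases Nat.lt_succ_iff_lt_or_eq.1 (by simpa using hi) with hi | rfl
    exacts [h i hi, hn]

/-- The positions of the variable `none` of the infinite word `s` inside its `k`-th block, where the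
blocks are delimited by the sequence `p`. -/
def variablePositions (s : ℕ → Option α) (p : ℕ → ℕ) (k : ℕ) : Finset ℕ :=
  {n ∈ Finset.Ico (p k) (p (k + 1)) | s n = none}

variable {s : ℕ → Option α} {p : ℕ → ℕ}

theorem mem_variablePositions {k n : ℕ} :
    n ∈ variablePositions s p k ↔ (p k ≤ n ∧ n < p (k + 1)) ∧ s n = none := by
  simp [variablePositions]

theorem finLT_variablePositions (k : ℕ) :
    FinLT (variablePositions s p k) (variablePositions s p (k + 1)) :=
  fun _ hx _ hy => (mem_variablePositions.1 hx).1.2.trans_le (mem_variablePositions.1 hy).1.1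

theorem pairwise_disjoint_variablePositions (hp : Monotone p) :
    Pairwise (Disjoint on variablePositions s p) := fun i k hik => by
  have disjoint_Ico := hp.pairwise_disjoint_on_Ico_succ hik
  simp only [onFun, Nat.succ_eq_succ, ← Finset.coe_Ico, Finset.disjoint_coe] at disjoint_Ico
  exact disjoint_Ico.mono (Finset.filter_subset _ _) (Finset.filter_subset _ _)

theorem isLeast_variablePositions (hp : StrictMono p) (start : ∀ k, s (p k) = none) (k : ℕ) :
    IsLeast (variablePositions s p k : Set ℕ) (p k) :=
  ⟨mem_variablePositions.2 ⟨⟨le_rfl, hp k.lt_succ_self⟩, start k⟩,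
    fun _ hn => (mem_variablePositions.1 hn).1.1⟩

theorem instantiate_variablePositions_nil (hp : StrictMono p) (start : ∀ k, s (p k) = none)
    (b : ℕ → α) :
    instantiate b (variablePositions s p) [] = (List.range (p 0)).map b := by
  rw [instantiate, List.length_nil, (isLeast_variablePositions hp start 0).csInf_eq]
  exact List.map_congr_left fun n _ => instantiateLetter_of_forall_notMem (by simp)

theorem instantiate_variablePositions_concat (hp : StrictMono p) (start : ∀ k, s (p k) = none)
    (x : α) (a : List α) (t : α) :
    instantiate (fun n => (s n).getD x) (variablePositions s p) (a ++ [t]) =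
      instantiate (fun n => (s n).getD x) (variablePositions s p) a ++
        substVar t ((List.Ico (p a.length) (p (a.length + 1))).map s) := by
  have concat := instantiateLetter_concat (b := fun n => (s n).getD x)
    (pairwise_disjoint_variablePositions (s := s) hp.monotone) a t
  simp only [instantiate, substVar, List.length_append, List.length_singleton,
    (isLeast_variablePositions hp start _).csInf_eq, List.map_map]
  rw [← map_range_append_map_Ico _ (hp a.length.lt_succ_self).le]
  congr 1
  · refine List.map_congr_left fun n hn => (concat n).trans (if_neg fun h => ?_)
    exact (List.mem_range.1 hn).not_ge (mem_variablePositions.1 h).1.1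
  · refine List.map_congr_left fun n hn => (concat n).trans ?_
    rcases hs : s n with _ | y
    · simp [mem_variablePositions, List.Ico.mem.1 hn, hs]
    · have notMem (i : ℕ) : n ∉ variablePositions s p i := by simp [mem_variablePositions, hs]
      simp [notMem, instantiateLetter_of_forall_notMem (fun i _ => notMem i), hs]

theorem exists_forall_instantiate_eq_substBlocks [Nonempty α] (w₀ : List α)
    {v : ℕ → List (Option α)} (hv : ∀ k, v k ∈ leftVariableWords α) :
    ∃ (b : ℕ → α) (F : ℕ → Finset ℕ),
      (∀ k, (F k).Nonempty) ∧ (∀ k, FinLT (F k) (F (k + 1))) ∧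
      ∀ a, instantiate b F a = substBlocks w₀ v a := by
  have ne_nil (k : ℕ) : v k ≠ [] := fun h => by simpa [h, leftVariableWords] using hv k
  obtain ⟨s, p, hp, map_range, map_Ico⟩ := exists_infinite_concat (w₀.map some) ne_nil
  have start (k : ℕ) : s (p k) = none := by
    simpa [leftVariableWords, ← map_Ico, List.Ico.eq_cons (hp k.lt_succ_self)] using hv k
  let x : α := Classical.arbitrary α
  refine ⟨fun n => (s n).getD x, variablePositions s p,
    fun k => ⟨p k, (isLeast_variablePositions hp start k).1⟩, finLT_variablePositions, fun a => ?_⟩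
  induction a using List.reverseRecOn with
  | nil =>
    calc instantiate (fun n => (s n).getD x) (variablePositions s p) []
        = ((List.range (p 0)).map s).map (·.getD x) := by
          rw [instantiate_variablePositions_nil hp start, List.map_map, comp_def]
      _ = substBlocks w₀ v [] := by simp [map_range, substBlocks, comp_def]
  | append_singleton a t ih =>
    rw [instantiate_variablePositions_concat hp start, ih, map_Ico, substBlocks_concat]

end OrderedVariableWords

theorem ovw_two_general {α κ : Type*} [Finite α] [Nonempty α] [Finite κ] (c : List α → κ) :
    ∃ (b : ℕ → α) (F : ℕ → Finset ℕ),
      (∀ k, (F k).Nonempty) ∧ (∀ k, FinLT (F k) (F (k + 1))) ∧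
      ∃ j, ∀ a : List α, c (instantiate b F a) = j := by
  obtain ⟨j, w₀, v, hv, color_eq⟩ := exists_forall_color_substBlocks_eq c
  obtain ⟨b, F, nonempty, finLT, instantiate_eq⟩ := exists_forall_instantiate_eq_substBlocks w₀ hv
  exact ⟨b, F, nonempty, finLT, j, fun a => instantiate_eq a ▸ color_eq a⟩

/-- The Ordered Variable Word theorem `OVW(2,ℓ)` for the binary alphabet. -/
theorem ovw_two (ℓ : ℕ) (hℓ : 1 ≤ ℓ) (c : List Bool → ℕ) (hc : ∀ σ, c σ < ℓ) :
    ∃ (b : ℕ → Bool) (F : ℕ → Finset ℕ),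
      (∀ k, (F k).Nonempty) ∧ (∀ k, FinLT (F k) (F (k + 1))) ∧
      ∃ j < ℓ, ∀ a : List Bool, c (instWord b F a) = j := by
  obtain ⟨b, F, nonempty, finLT, j, hj⟩ := ovw_two_general fun σ => (⟨c σ, hc σ⟩ : Fin ℓ)
  exact ⟨b, F, nonempty, finLT, j, j.2, fun a =>
    instWord_eq_instantiate b F a ▸ congrArg Fin.val (hj a)⟩
end

section
/- For every ℓ ≥ 1 and every sequence c_0, c_1, c_2, … of colorings c_i : 2^{<ω} → {0,…,ℓ−1} of the finite binary strings, there exists an infinite ordered variable word over {0,1}, encoded by b : ℕ → {0,1} and nonempty finite sets F_1 < F_2 < ⋯, such that for every i ≥ 0 and every b̄ ∈ {0,1}^i there is a color j < ℓ with c_i(W(b̄a)) = j for every k ≥ 0 and every a ∈ {0,1}^k, where b̄a ∈ {0,1}^{i+k} denotes the concatenation of b̄ and a. (The sequential Ordered Variable Word theorem Seq-OVW(2,ℓ).) -/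
/-!
Write a variable word as a word over `Option α`, with `none` for the variable. In the compact
semigroup of ultrafilters on words, take a minimal idempotent `p`, and below its image among the
ultrafilters on words over `Option α` an idempotent `q` concentrating on variable words. Every
substitution maps `q` to an idempotent below `p`, hence to `p` itself. If `r` is the image of `q`
under the map keeping the part before the first variable, then `p * q = q` gives `p * r = r`, so the
`r`-limit of the color of `P ++ x` does not change when `P` is extended by any instance of a
`q`-typical variable word. Choosing typical variable words one after the other, each good for the
finitely many instances of its predecessors, yields the blocks of the required infinite word.
-/

open Filter

section CompactSemigroup

variable {M : Type*} [Semigroup M]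

/-- Minimality in the usual order on idempotents, in which `q` lies below `p` when
`p * q = q` and `q * p = q`. -/
def IsMinimalIdempotent (p : M) : Prop :=
  IsIdempotentElem p ∧ ∀ q, IsIdempotentElem q → p * q = q → q * p = q → q = p

variable [TopologicalSpace M]

/-- Nonempty closed left ideals of a topological semigroup. The minimal ones supply the minimal
idempotents. -/
structure IsClosedLeftIdeal (N : Set M) : Prop where
  isClosed : IsClosed N
  nonempty : N.Nonempty
  mul_mem : ∀ x, ∀ y ∈ N, x * y ∈ N

variable [CompactSpace M]

theorem exists_minimal_isClosedLeftIdeal [Nonempty M] :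
    ∃ N : Set M, Minimal IsClosedLeftIdeal N := by
  refine zorn_superset {N | IsClosedLeftIdeal N} fun C hC hchain => ?_
  refine ⟨⋂₀ C, ⟨isClosed_sInter fun N hN => (hC hN).isClosed, ?_, ?_⟩,
    fun N hN => Set.sInter_subset_of_mem hN⟩
  · obtain rfl | hne := C.eq_empty_or_nonempty
    · simp
    have := hne.coe_sort
    exact IsCompact.nonempty_sInter_of_directed_nonempty_isCompact_isClosed
      (IsChain.directedOn hchain.symm) (fun N hN => (hC hN).nonempty)
      (fun N hN => (hC hN).isClosed.isCompact) (fun N hN => (hC hN).isClosed)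
  · exact fun x y hy N hN => (hC hN).mul_mem x y (hy N hN)

variable [T2Space M]

theorem isClosedLeftIdeal_range_mul_right {q : M} (hq : Continuous (· * q)) :
    IsClosedLeftIdeal (Set.range (· * q)) where
  isClosed := (isCompact_range hq).isClosed
  nonempty := ⟨q * q, q, rfl⟩
  mul_mem := by
    rintro x _ ⟨y, rfl⟩
    exact ⟨x * y, mul_assoc x y q⟩

theorem exists_isMinimalIdempotent [Nonempty M] (hcont : ∀ r : M, Continuous (· * r)) :
    ∃ p : M, IsMinimalIdempotent p := by
  obtain ⟨N, hN⟩ := exists_minimal_isClosedLeftIdeal (M := M)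
  obtain ⟨p, hpN, hp⟩ := exists_idempotent_in_compact_subsemigroup hcont N hN.prop.nonempty
    hN.prop.isClosed.isCompact fun x _ y hy => hN.prop.mul_mem x y hy
  refine ⟨p, hp, fun q hq hpq hqp => ?_⟩
  have hqN : q ∈ N := hqp ▸ hN.prop.mul_mem q p hpN
  have hrange : Set.range (· * q) = N := by
    refine hN.eq_of_subset (isClosedLeftIdeal_range_mul_right (hcont q)) ?_
    rintro _ ⟨x, rfl⟩
    exact hN.prop.mul_mem x q hqN
  obtain ⟨x, hx : x * q = p⟩ := hrange ▸ hpN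
  calc q = x * q * q := by rw [hx, hpq]
    _ = p := by rw [mul_assoc, hq.eq, hx]

theorem exists_isIdempotentElem_mem_ideal_below (hcont : ∀ r : M, Continuous (· * r))
    {I : Set M} (hI : IsClosedLeftIdeal I) (hright : ∀ x ∈ I, ∀ y, x * y ∈ I) {p : M}
    (hp : IsIdempotentElem p) :
    ∃ q ∈ I, IsIdempotentElem q ∧ p * q = q ∧ q * p = q := by
  obtain ⟨_, ⟨x, hx, rfl⟩, hidem : x * p * (x * p) = x * p⟩ :=
    exists_idempotent_in_compact_subsemigroup hcont ((· * p) '' I) (hI.nonempty.image _)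
      (hI.isClosed.isCompact.image (hcont p)) (by
        rintro _ ⟨y, -, rfl⟩ _ ⟨z, hz, rfl⟩
        exact ⟨y * p * z, hI.mul_mem _ _ hz, mul_assoc _ _ _⟩)
  refine ⟨p * (x * p), hI.mul_mem _ _ (hright x hx p), ?_, ?_, ?_⟩
  · calc p * (x * p) * (p * (x * p)) = p * (x * (p * p) * (x * p)) := by simp only [mul_assoc]
      _ = p * (x * p) := by rw [hp.eq, hidem]
  · rw [← mul_assoc, hp.eq]
  · rw [mul_assoc, mul_assoc, hp.eq]

end CompactSemigroup

section UltrafilterSemigroup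

attribute [local instance] Ultrafilter.mul Ultrafilter.semigroup

theorem ultrafilter_map_mul_s1 {M N : Type*} [Mul M] [Mul N] {U V : Ultrafilter M} {f g h : M → N}
    (hfgh : ∀ᶠ x in (U : Filter M), ∀ y, f (x * y) = g x * h y) :
    (U * V).map f = U.map g * V.map h := by
  refine Ultrafilter.coe_inj.1 (Filter.ext' fun P => ?_)
  simp only [Ultrafilter.coe_map, eventually_map, Ultrafilter.eventually_mul]
  refine eventually_congr ?_
  filter_upwards [hfgh] with x hx
  simp only [hx]

theorem ultrafilter_map_mul_hom {M N : Type*} [Mul M] [Mul N] (f : M →ₙ* N)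
    (U V : Ultrafilter M) : (U * V).map f = U.map f * V.map f :=
  ultrafilter_map_mul_s1 (.of_forall fun x => map_mul f x)

theorem isClosedLeftIdeal_setOf_mem_ultrafilter {M : Type*} [Semigroup M] {I : Set M}
    (hne : I.Nonempty) (hleft : ∀ x, ∀ y ∈ I, x * y ∈ I) :
    IsClosedLeftIdeal {U : Ultrafilter M | I ∈ U} where
  isClosed := ultrafilter_isClosed_basic I
  nonempty := hne.elim fun x hx => ⟨pure x, Ultrafilter.mem_pure.2 hx⟩
  mul_mem U V (hV : I ∈ V) := (Ultrafilter.eventually_mul U V (· ∈ I)).2 <|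
    .of_forall fun x => mem_of_superset hV (hleft x)

-- Retractions of `ι` preserve the order on idempotents, so minimality of `p` forces `q.map φ = p`.
theorem exists_ultrafilter_mem_ideal_map_retraction_eq {M N : Type*} [Semigroup M] [Nonempty M]
    [Semigroup N] (ι : M →ₙ* N) {I : Set N} (hne : I.Nonempty)
    (hleft : ∀ x, ∀ y ∈ I, x * y ∈ I) (hright : ∀ x ∈ I, ∀ y, x * y ∈ I) :
    ∃ (p : Ultrafilter M) (q : Ultrafilter N), I ∈ q ∧ p.map ι * q = q ∧
      ∀ φ : N →ₙ* M, Function.LeftInverse φ ι → q.map φ = p := by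
  obtain ⟨p, hp, hmin⟩ :=
    exists_isMinimalIdempotent (M := Ultrafilter M) Ultrafilter.continuous_mul_left
  have hιp : IsIdempotentElem (p.map ι) := by
    rw [IsIdempotentElem, ← ultrafilter_map_mul_hom, hp.eq]
  have hright' : ∀ U ∈ {U : Ultrafilter N | I ∈ U}, ∀ V, U * V ∈ {U : Ultrafilter N | I ∈ U} :=
    fun U hU V => (Ultrafilter.eventually_mul U V (· ∈ I)).2 <|
      mem_of_superset hU fun x hx => .of_forall (hright x hx)
  obtain ⟨q, hqI, hq, hpq, hqp⟩ := exists_isIdempotentElem_mem_ideal_below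
    Ultrafilter.continuous_mul_left (isClosedLeftIdeal_setOf_mem_ultrafilter hne hleft) hright' hιp
  refine ⟨p, q, hqI, hpq, fun φ hφ => ?_⟩
  have hφp : (p.map ι).map φ = p := by
    rw [Ultrafilter.map_map, hφ.comp_eq_id, Ultrafilter.map_id]
  refine hmin _ ?_ ?_ ?_
  · rw [IsIdempotentElem, ← ultrafilter_map_mul_hom, hq.eq]
  · conv_lhs => rw [← hφp, ← ultrafilter_map_mul_hom, hpq]
  · conv_lhs => rw [← hφp, ← ultrafilter_map_mul_hom, hqp]

end UltrafilterSemigroup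

theorem exists_seq_forall_rel_map_range {β : Type*} {R : List β → β → Prop}
    (hR : ∀ l, ∃ x, R l x) : ∃ u : ℕ → β, ∀ n, R ((List.range n).map u) (u n) := by
  choose next hnext using hR
  let stage : ℕ → List β := fun n => n.rec [] fun _ l => l ++ [next l]
  have hstage (n : ℕ) : (List.range n).map (fun k => next (stage k)) = stage n := by
    induction n with
    | zero => rfl
    | succ n ih => rw [List.range_succ, List.map_append, ih]; rfl
  exact ⟨fun k => next (stage k), fun n => hstage n ▸ hnext (stage n)⟩

section InstWordOver

variable {α : Type*} {b : ℕ → α} {F : ℕ → Finset ℕ} {a : List α} {n : ℕ}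

/-- The letter at position `n` of an infinite ordered variable word over an arbitrary alphabet,
encoded as in `instWord`, once the letters of `a` are substituted for its first variables. -/
noncomputable def instLetter (b : ℕ → α) (F : ℕ → Finset ℕ) (a : List α) (n : ℕ) : α :=
  if h : ∃ i, i < a.length ∧ n ∈ F i then a.get ⟨Nat.find h, (Nat.find_spec h).1⟩ else b n

/-- The instantiation `W(a)` of an infinite ordered variable word over an arbitrary alphabet,
extending `instWord` beyond the alphabet `Bool`. -/
noncomputable def instWordOver (b : ℕ → α) (F : ℕ → Finset ℕ) (a : List α) : List α :=
  (List.range (sInf (F a.length : Set ℕ))).map (instLetter b F a)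

theorem instWord_eq_instWordOver (b : ℕ → Bool) (F : ℕ → Finset ℕ) (a : List Bool) :
    instWord b F a = instWordOver b F a := by
  refine List.map_congr_left fun n _ => ?_
  unfold instLetter
  split_ifs with h
  · exact List.getD_eq_getElem a false (Nat.find_spec h).1
  · rfl

theorem instLetter_of_mem {k : ℕ} (hn : n ∈ F k) (hk : k < a.length)
    (huniq : ∀ i, n ∈ F i → i = k) : instLetter b F a n = a[k] := by
  have h : ∃ i, i < a.length ∧ n ∈ F i := ⟨k, hk, hn⟩
  simp [instLetter, h, huniq _ (Nat.find_spec h).2]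

theorem instLetter_of_forall_notMem (hn : ∀ i < a.length, n ∉ F i) :
    instLetter b F a n = b n :=
  dif_neg fun ⟨i, hi, hmem⟩ => hn i hi hmem

end InstWordOver

/-- Finite words over `α` in one variable, which is encoded by `none`; the variable may be absent,
so the words in which it occurs are singled out by `none ∈ u`. -/
abbrev VarWord (α : Type*) := List (Option α)

namespace VarWord

variable {α : Type*}

/-- The word obtained by substituting the letter `e` for the variable. -/
def subst (e : α) (u : VarWord α) : List α := u.map (·.getD e)

/-- The word preceding the first occurrence of the variable, or the whole word if there is none. -/
def constPrefix : VarWord α → List α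
  | [] => []
  | none :: _ => []
  | some x :: u => x :: constPrefix u

theorem constPrefix_map_some_append (x : List α) (u : VarWord α) :
    constPrefix (x.map some ++ u) = x ++ constPrefix u := by
  induction x with
  | nil => rfl
  | cons e x ih => simp [constPrefix, ih]

theorem getElem?_eq_some_of_lt_length_constPrefix {u : VarWord α} {i : ℕ}
    (hi : i < (constPrefix u).length) : u[i]? = some (some (constPrefix u)[i]) := by
  induction u generalizing i with
  | nil => simp [constPrefix] at hi
  | cons o u ih =>
    match o, i with
    | none, _ => simp [constPrefix] at hi
    | some _, 0 => rfl
    | some _, i + 1 => exact ih (by simpa [constPrefix] using hi)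

theorem getElem?_length_constPrefix {u : VarWord α} (hu : none ∈ u) :
    u[(constPrefix u).length]? = some none := by
  induction u with
  | nil => simp at hu
  | cons o u ih =>
    cases o with
    | none => rfl
    | some x => exact ih (by simpa using hu)

section Ultrafilter

attribute [local instance] Ultrafilter.mul Ultrafilter.semigroup

/-- Invariance under substitution: the image `r` of `q` under `constPrefix` satisfies
`q.map (subst e) * r = r` for every letter `e`. It is spelled out through eventual properties, and
makes the limits of colors along `r` stable under appending instances of variable words. -/
def SubstInvariant (q : Ultrafilter (VarWord α)) : Prop :=
  ∀ (e : α) (P : List α → Prop), (∀ᶠ v in (q : Filter (VarWord α)), P (constPrefix v)) →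
    ∀ᶠ u in (q : Filter (VarWord α)), ∀ᶠ v in (q : Filter (VarWord α)),
      P (subst e u ++ constPrefix v)

variable (α) in
theorem exists_substInvariant :
    ∃ q : Ultrafilter (VarWord α),
      (∀ᶠ u in (q : Filter (VarWord α)), none ∈ u) ∧ SubstInvariant q := by
  obtain ⟨p, q, hnone, hpq, hretract⟩ := exists_ultrafilter_mem_ideal_map_retraction_eq
    (FreeMonoid.map (some : α → Option α)).toMulHom (I := {u | none ∈ u})
    ⟨.of none, FreeMonoid.mem_of_self⟩ (fun _ _ hv => FreeMonoid.mem_mul.2 (.inr hv))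
    (fun _ hu _ => FreeMonoid.mem_mul.2 (.inl hu))
  refine ⟨q.map FreeMonoid.toList, hnone, fun e P hP => ?_⟩
  let substHom : FreeMonoid (Option α) →ₙ* FreeMonoid α := (FreeMonoid.map (·.getD e)).toMulHom
  let prefixMap : FreeMonoid (Option α) → FreeMonoid α := fun u => .ofList (constPrefix u.toList)
  have hretr : Function.LeftInverse substHom (FreeMonoid.map some).toMulHom := fun x =>
    FreeMonoid.toList.injective (by simp [substHom, FreeMonoid.toList_map, Function.comp_def])
  have hprefix : q.map substHom * q.map prefixMap = q.map prefixMap := by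
    conv_rhs => rw [← hpq]
    rw [hretract substHom hretr, ultrafilter_map_mul_s1 (g := substHom) (h := prefixMap),
      Ultrafilter.map_map, hretr.comp_eq_id, Ultrafilter.map_id]
    exact eventually_map.2 (.of_forall fun x y => by
      rw [hretr x]
      simp [prefixMap, constPrefix_map_some_append])
  have hPprefix : ∀ᶠ x in (q.map prefixMap : Filter (FreeMonoid α)), P x.toList := hP
  rw [← hprefix] at hPprefix
  exact hPprefix

theorem SubstInvariant.exists_limit_color {κ : Type*} [Finite α] [Finite κ]
    {q : Ultrafilter (VarWord α)} (hq : SubstInvariant q) (c : List α → κ) :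
    ∃ limitColor : List α → κ, ∀ P, ∀ᶠ u in (q : Filter (VarWord α)),
      c (P ++ constPrefix u) = limitColor P ∧
        ∀ e, limitColor (P ++ subst e u) = limitColor P := by
  have hlim (P : List α) : ∃ k, ∀ᶠ u in (q : Filter (VarWord α)), c (P ++ constPrefix u) = k :=
    Ultrafilter.eventually_exists_iff.1 (.of_forall fun _ => ⟨_, rfl⟩)
  choose limitColor hlimit using hlim
  refine ⟨limitColor, fun P => (hlimit P).and (eventually_all.2 fun e => ?_)⟩
  filter_upwards [hq e (fun x => c (P ++ x) = limitColor P) (hlimit P)] with u hu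
  obtain ⟨v, hPuv, hPv⟩ := ((hlimit (P ++ subst e u)).and hu).exists
  rw [← hPuv, ← hPv, List.append_assoc]

end Ultrafilter

section Blocks

/-- The concatenation of the first `a.length` of the blocks `u 0, u 1, …`, with the letters of `a`
substituted for their respective variables. -/
def substBlocks (u : ℕ → VarWord α) (a : List α) : List α :=
  (List.zipWith subst a ((List.range a.length).map u)).flatten

@[simp]
theorem substBlocks_nil (u : ℕ → VarWord α) : substBlocks u [] = [] := rfl

theorem substBlocks_concat (u : ℕ → VarWord α) (a : List α) (e : α) :
    substBlocks u (a ++ [e]) = substBlocks u a ++ subst e (u a.length) := by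
  simp [substBlocks, List.range_succ, List.zipWith_append]

variable [Finite α] {κ : ℕ → Type*} [∀ i, Finite (κ i)] (c : ∀ i, List α → κ i)

theorem exists_blocks_limit_color :
    ∃ (u : ℕ → VarWord α) (limitColor : ∀ i, List α → κ i), (∀ n, none ∈ u n) ∧
      ∀ a, ∀ i ≤ a.length,
        c i (substBlocks u a ++ constPrefix (u a.length)) = limitColor i (substBlocks u a) ∧
          ∀ e, limitColor i (substBlocks u (a ++ [e])) = limitColor i (substBlocks u a) := by
  obtain ⟨q, hnone, hq⟩ := exists_substInvariant α
  choose limitColor hlimit using fun i => hq.exists_limit_color (c i)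
  have hnext (l : List (VarWord α)) : ∃ v : VarWord α, none ∈ v ∧
      ∀ a ∈ {a : List α | a.length = l.length}, ∀ i ∈ Set.Iic l.length,
        let P := (List.zipWith subst a l).flatten
        c i (P ++ constPrefix v) = limitColor i P ∧
          ∀ e, limitColor i (P ++ subst e v) = limitColor i P :=
    (hnone.and <| (eventually_all_finite (List.finite_length_eq α _)).2 fun _ _ =>
      (eventually_all_finite (Set.finite_Iic _)).2 fun i _ => hlimit i _).exists
  obtain ⟨u, hu⟩ := exists_seq_forall_rel_map_range hnext
  refine ⟨u, limitColor, fun n => (hu n).1, fun a i hi => ?_⟩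
  simp only [substBlocks_concat]
  exact (hu a.length).2 a (by simp) i (by simpa using hi)

theorem exists_blocks_color_eq :
    ∃ u : ℕ → VarWord α, (∀ n, none ∈ u n) ∧ ∀ x : List α, ∃ k : κ x.length, ∀ a,
      c x.length (substBlocks u (x ++ a) ++ constPrefix (u (x ++ a).length)) = k := by
  obtain ⟨u, limitColor, hnone, hu⟩ := exists_blocks_limit_color c
  refine ⟨u, hnone, fun x => ⟨limitColor x.length (substBlocks u x), fun a => ?_⟩⟩
  have hstable : limitColor x.length (substBlocks u (x ++ a)) =
      limitColor x.length (substBlocks u x) := by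
    induction a using List.reverseRecOn with
    | nil => rw [List.append_nil]
    | append_singleton a e ih =>
      rw [← List.append_assoc, (hu (x ++ a) x.length (by simp)).2 e, ih]
  rw [(hu (x ++ a) x.length (by simp)).1, hstable]

end Blocks

section Encoding

variable (u : ℕ → VarWord α)

/-- The position of the first letter of `u n` in the infinite concatenation of `u 0, u 1, …`. -/
def blockStart (n : ℕ) : ℕ := ∑ i ∈ Finset.range n, (u i).length

theorem blockStart_succ (n : ℕ) : blockStart u (n + 1) = blockStart u n + (u n).length :=
  Finset.sum_range_succ _ n

theorem blockStart_mono : Monotone (blockStart u) :=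
  monotone_nat_of_le_succ fun n => by simp [blockStart_succ]

variable {u} in
theorem index_eq_of_blockStart_add_eq {m n i j : ℕ} (hi : i < (u m).length) (hj : j < (u n).length)
    (h : blockStart u m + i = blockStart u n + j) : m = n := by
  have hm := blockStart_succ u m
  have hn := blockStart_succ u n
  rcases lt_trichotomy m n with hmn | hmn | hmn
  · have := blockStart_mono u (Nat.add_one_le_of_lt hmn)
    omega
  · exact hmn
  · have := blockStart_mono u (Nat.add_one_le_of_lt hmn)
    omega

/-- The infinite concatenation of `u 0, u 1, …`. It is a junk `none` beyond the end if only
finitely many of the `u n` are nonempty. -/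
noncomputable def concatBlocks : ℕ → Option α :=
  Function.extend (fun x : Σ n, Fin (u n).length => blockStart u x.1 + x.2)
    (fun x => (u x.1)[x.2]) (fun _ => none)

variable {u} in
theorem concatBlocks_blockStart_add {n i : ℕ} {o : Option α} (ho : (u n)[i]? = some o) :
    concatBlocks u (blockStart u n + i) = o := by
  have hinj : Function.Injective fun x : Σ n, Fin (u n).length => blockStart u x.1 + x.2 := by
    rintro ⟨m, i⟩ ⟨n, j⟩ h
    obtain rfl := index_eq_of_blockStart_add_eq i.2 j.2 h
    simpa [Fin.ext_iff] using h
  obtain ⟨hi, rfl⟩ := List.getElem?_eq_some_iff.1 ho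
  exact hinj.extend_apply _ _ ⟨n, i, hi⟩

/-- The positions of the variable of `u n` in the infinite concatenation of `u 0, u 1, …`. -/
noncomputable def varPositions (n : ℕ) : Finset ℕ :=
  {m ∈ Finset.Ico (blockStart u n) (blockStart u (n + 1)) | (concatBlocks u m).isNone}

variable {u}

theorem mem_varPositions {n m : ℕ} :
    m ∈ varPositions u n ↔ ∃ i, (u n)[i]? = some none ∧ blockStart u n + i = m := by
  simp only [varPositions, Finset.mem_filter, Finset.mem_Ico, blockStart_succ,
    Option.isNone_iff_eq_none]
  constructor
  · rintro ⟨⟨hle, hlt⟩, hm⟩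
    obtain ⟨i, rfl⟩ := Nat.exists_eq_add_of_le hle
    have hi : (u n)[i]? = some (u n)[i] := List.getElem?_eq_getElem (by omega)
    exact ⟨i, by rw [hi, ← concatBlocks_blockStart_add hi, hm], rfl⟩
  · rintro ⟨i, hi, rfl⟩
    obtain ⟨hlt, -⟩ := List.getElem?_eq_some_iff.1 hi
    exact ⟨⟨by omega, by omega⟩, concatBlocks_blockStart_add hi⟩

theorem finLT_varPositions (n : ℕ) : FinLT (varPositions u n) (varPositions u (n + 1)) := by
  intro x hx y hy
  simp only [varPositions, Finset.mem_filter, Finset.mem_Ico] at hx hy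
  omega

theorem isLeast_varPositions {n : ℕ} (hn : none ∈ u n) :
    IsLeast (varPositions u n : Set ℕ) (blockStart u n + (constPrefix (u n)).length) := by
  refine ⟨mem_varPositions.2 ⟨_, getElem?_length_constPrefix hn, rfl⟩, fun m hm => ?_⟩
  obtain ⟨i, hnone, rfl⟩ := mem_varPositions.1 hm
  by_contra! hlt
  have hsome := getElem?_eq_some_of_lt_length_constPrefix (Nat.lt_of_add_lt_add_left hlt)
  simp [hnone] at hsome

theorem eq_none_and_eq_of_blockStart_add_mem_varPositions {m n i : ℕ} {o : Option α}
    (ho : (u n)[i]? = some o) (hm : blockStart u n + i ∈ varPositions u m) : o = none ∧ m = n := by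
  obtain ⟨j, hj, heq⟩ := mem_varPositions.1 hm
  obtain ⟨hi, -⟩ := List.getElem?_eq_some_iff.1 ho
  obtain ⟨hj', -⟩ := List.getElem?_eq_some_iff.1 hj
  obtain rfl := index_eq_of_blockStart_add_eq hj' hi heq
  obtain rfl := Nat.add_left_cancel heq
  exact ⟨Option.some.inj (ho.symm.trans hj), rfl⟩

variable [Inhabited α]

variable (u) in
/-- The constant letters of the infinite concatenation of `u 0, u 1, …`; the positions of the
variables hold a junk `default`. -/
noncomputable def constLetters (m : ℕ) : α := (concatBlocks u m).getD default

theorem instLetter_blockStart_add_of_some {a : List α} {n i : ℕ} {x : α}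
    (hx : (u n)[i]? = some (some x)) :
    instLetter (constLetters u) (varPositions u) a (blockStart u n + i) = x := by
  rw [instLetter_of_forall_notMem fun m _ hm => by
    simpa using (eq_none_and_eq_of_blockStart_add_mem_varPositions hx hm).1]
  simp [constLetters, concatBlocks_blockStart_add hx]

theorem instLetter_blockStart_add_of_lt {a : List α} {n i : ℕ} {o : Option α} (hn : n < a.length)
    (ho : (u n)[i]? = some o) :
    instLetter (constLetters u) (varPositions u) a (blockStart u n + i) = o.getD a[n] := by
  cases o with
  | none =>
    exact instLetter_of_mem (mem_varPositions.2 ⟨i, ho, rfl⟩) hn fun m hm =>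
      (eq_none_and_eq_of_blockStart_add_mem_varPositions ho hm).2
  | some x => exact instLetter_blockStart_add_of_some ho

theorem map_instLetter_range_blockStart (a : List α) {n : ℕ} (hn : n ≤ a.length) :
    (List.range (blockStart u n)).map (instLetter (constLetters u) (varPositions u) a) =
      substBlocks u (a.take n) := by
  induction n with
  | zero => simp [blockStart]
  | succ n ih =>
    have hblock : (List.range (u n).length).map
        (fun i => instLetter (constLetters u) (varPositions u) a (blockStart u n + i)) =
          subst a[n] (u n) :=
      List.ext_getElem (by simp [subst]) fun i hi _ => by
        have hi : i < (u n).length := by simpa using hi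
        simpa [subst] using instLetter_blockStart_add_of_lt hn (List.getElem?_eq_getElem hi)
    rw [blockStart_succ, List.range_add, List.map_append, ih (by omega), List.map_map,
      List.take_succ_eq_append_getElem hn, substBlocks_concat, List.length_take_of_le (by omega)]
    exact congrArg _ hblock

theorem instWordOver_eq_substBlocks_append (hu : ∀ n, none ∈ u n) (a : List α) :
    instWordOver (constLetters u) (varPositions u) a =
      substBlocks u a ++ constPrefix (u a.length) := by
  rw [instWordOver, (isLeast_varPositions (hu a.length)).csInf_eq, List.range_add,
    List.map_append, map_instLetter_range_blockStart a le_rfl, List.take_length, List.map_map]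
  refine congrArg _ (List.ext_getElem (by simp) fun i _ hi => ?_)
  simpa using
    instLetter_blockStart_add_of_some (getElem?_eq_some_of_lt_length_constPrefix hi)

end Encoding

end VarWord

theorem seq_ovw_two_general {α : Type*} [Finite α] [Nonempty α] {κ : ℕ → Type*}
    [∀ i, Finite (κ i)] (c : ∀ i, List α → κ i) :
    ∃ (b : ℕ → α) (F : ℕ → Finset ℕ),
      (∀ k, (F k).Nonempty) ∧ (∀ k, FinLT (F k) (F (k + 1))) ∧
      ∀ bbar : List α, ∃ j, ∀ a, c bbar.length (instWordOver b F (bbar ++ a)) = j := by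
  inhabit α
  obtain ⟨u, hnone, hcolor⟩ := VarWord.exists_blocks_color_eq c
  refine ⟨VarWord.constLetters u, VarWord.varPositions u,
    fun k => ⟨_, (VarWord.isLeast_varPositions (hnone k)).1⟩, VarWord.finLT_varPositions, ?_⟩
  simpa only [VarWord.instWordOver_eq_substBlocks_append hnone] using hcolor

/-- The sequential Ordered Variable Word theorem `Seq-OVW(2,ℓ)`. -/
theorem seq_ovw_two (ℓ : ℕ) (hℓ : 1 ≤ ℓ) (c : ℕ → List Bool → ℕ)
    (hc : ∀ i σ, c i σ < ℓ) :
    ∃ (b : ℕ → Bool) (F : ℕ → Finset ℕ),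
      (∀ k, (F k).Nonempty) ∧ (∀ k, FinLT (F k) (F (k + 1))) ∧
      ∀ bbar : List Bool, ∃ j < ℓ,
        ∀ a : List Bool, c bbar.length (instWord b F (bbar ++ a)) = j := by
  obtain ⟨b, F, hne, hlt, hcolor⟩ := seq_ovw_two_general fun i σ => (⟨c i σ, hc i σ⟩ : Fin ℓ)
  refine ⟨b, F, hne, hlt, fun bbar => ?_⟩
  obtain ⟨j, hj⟩ := hcolor bbar
  exact ⟨j, j.2, fun a => instWord_eq_instWordOver b F _ ▸ congrArg Fin.val (hj a)⟩
end

section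
/- Fix ℓ ≥ 1. Suppose the Finite Union Theorem FUT_ℓ holds, i.e., for every coloring d : 𝒫_fin(ℕ) → {0,…,ℓ−1} there exist an IP collection 𝓘 and a color i < ℓ such that d(S) = i for all S ∈ 𝓘. Then the statement WFUT²_ℓ holds: for every coloring f : 𝒫_fin(ℕ) × ℕ → {0,…,ℓ−1} there exist an IP collection 𝓙 and a color i < ℓ such that f(S, min T) = i for every S, T ∈ 𝓙 with S < T. -/
/-- An IP collection: an infinite family of nonempty finite subsets of `ℕ`, closed under
unions of finitely many (at least one) of its members, and containing an infinite
subfamily of pairwise disjoint sets. -/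
def IsIPCollection (I : Set (Finset ℕ)) : Prop :=
  I.Infinite ∧ (∀ S ∈ I, S.Nonempty) ∧
  (∀ 𝓕 : Finset (Finset ℕ), 𝓕.Nonempty → ↑𝓕 ⊆ I → 𝓕.sup id ∈ I) ∧
  ∃ D ⊆ I, D.Infinite ∧ D.Pairwise fun S T => Disjoint S T

/-!
By compactness, pass to a subsequence `x` of `ℕ` along which every `n ↦ f S n` is eventually equal
to a limit colour `d S`. The finite union theorem applied to `S ↦ d (x '' S)` gives an IP
collection `I` on which the limit colour is a constant `c`. Among the disjoint members of `I` choose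
blocks `B 0 < B 1 < ⋯`, each so far beyond the preceding ones that the finitely many members of `I`
lying below an element of `B m` have already reached their limit colour on `B n` for `m < n`.
The images under `x` of the finite unions of the blocks form the required collection.
-/

open Filter Function

theorem exists_strictMono_forall_eventually_eq {ι α : Type*} [Countable ι] (f : ι → ℕ → α)
    (hf : ∀ i, (Set.range (f i)).Finite) :
    ∃ x : ℕ → ℕ, StrictMono x ∧ ∀ i, ∃ c, ∀ᶠ k in atTop, f i (x k) = c := by
  let : TopologicalSpace α := ⊥
  have : DiscreteTopology α := ⟨rfl⟩
  have hcompact : IsCompact (Set.univ.pi fun i ↦ Set.range (f i)) :=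
    isCompact_univ_pi fun i ↦ (hf i).isCompact
  obtain ⟨d, -, x, hx, hlim⟩ :=
    hcompact.tendsto_subseq (x := fun n i ↦ f i n) fun n i _ ↦ Set.mem_range_self n
  refine ⟨x, hx, fun i ↦ ⟨d i, ?_⟩⟩
  simpa only [nhds_discrete, tendsto_pure, comp_apply] using tendsto_pi_nhds.1 hlim i

theorem exists_disjoint_of_infinite_of_pairwise_disjoint {α : Type*} {D : Set (Finset α)}
    (hinf : D.Infinite) (hdisj : D.Pairwise Disjoint) (A : Finset α) :
    ∃ S ∈ D, Disjoint S A := by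
  by_contra! hmeet
  simp only [Finset.not_disjoint_iff] at hmeet
  obtain ⟨S₀, hS₀⟩ := hinf.nonempty
  have : Nonempty α := (hmeet S₀ hS₀).nonempty
  choose! a haS haA using hmeet
  obtain ⟨S, hS, T, hT, hne, heq⟩ := hinf.exists_ne_map_eq_of_mapsTo haA A.finite_toSet
  exact Finset.disjoint_left.1 (hdisj hS hT hne) (haS S hS) (heq ▸ haS T hT)

theorem finLT_image_iff {x : ℕ → ℕ} (hx : StrictMono x) {S T : Finset ℕ} :
    FinLT (S.image x) (T.image x) ↔ FinLT S T := by
  simp only [FinLT, Finset.forall_mem_image, hx.lt_iff_lt]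

/-- The family `FU(B)` of all unions of finitely many, and at least one, terms of the sequence
`B`: the IP collection generated by `B` when its terms are nonempty and pairwise disjoint. -/
def finiteUnions (B : ℕ → Finset ℕ) : Set (Finset ℕ) :=
  (fun F : Finset ℕ ↦ F.biUnion B) '' {F | F.Nonempty}

theorem mem_finiteUnions_self (B : ℕ → Finset ℕ) (n : ℕ) : B n ∈ finiteUnions B :=
  ⟨{n}, Finset.singleton_nonempty n, Finset.singleton_biUnion⟩

theorem sup_mem_finiteUnions {B : ℕ → Finset ℕ} {𝓕 : Finset (Finset ℕ)} (hne : 𝓕.Nonempty)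
    (h𝓕 : ↑𝓕 ⊆ finiteUnions B) : 𝓕.sup id ∈ finiteUnions B := by
  obtain ⟨𝓖, h𝓖, rfl⟩ := Finset.subset_set_image_iff.1 h𝓕
  obtain ⟨F, hF⟩ := Finset.image_nonempty.1 hne
  refine ⟨𝓖.biUnion id, (h𝓖 hF).mono (Finset.subset_biUnion_of_mem id hF), ?_⟩
  simp only [Finset.sup_image, id_comp, Finset.sup_eq_biUnion, Finset.biUnion_biUnion, id]

theorem isIPCollection_finiteUnions {B : ℕ → Finset ℕ} (hne : ∀ n, (B n).Nonempty)
    (hdisj : Pairwise (Disjoint on B)) : IsIPCollection (finiteUnions B) := by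
  have hinj : Injective B := pairwise_ne_iff_injective.1 <|
    hdisj.mono fun m n hmn ↦ hmn.ne (hne m).ne_empty
  have hinf : (Set.range B).Infinite := Set.infinite_range_of_injective hinj
  have hsub : Set.range B ⊆ finiteUnions B := Set.range_subset_iff.2 (mem_finiteUnions_self B)
  refine ⟨hinf.mono hsub, ?_, fun 𝓕 ↦ sup_mem_finiteUnions, Set.range B, hsub, hinf, ?_⟩
  · rintro _ ⟨F, hF, rfl⟩
    exact Finset.Nonempty.biUnion hF fun n _ ↦ hne n
  · exact hdisj.range_pairwise

theorem exists_lt_mem_mem_of_finLT {B : ℕ → Finset ℕ} (hB : ∀ m n, m < n → FinLT (B m) (B n))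
    {S T : Finset ℕ} (hS : S ∈ finiteUnions B) (hT : T ∈ finiteUnions B) (hST : FinLT S T)
    {a b : ℕ} (ha : a ∈ S) (hb : b ∈ T) : ∃ m n, m < n ∧ a ∈ B m ∧ b ∈ B n := by
  obtain ⟨F, -, rfl⟩ := hS
  obtain ⟨G, -, rfl⟩ := hT
  obtain ⟨m, hm, ham⟩ := Finset.mem_biUnion.1 ha
  obtain ⟨n, -, hbn⟩ := Finset.mem_biUnion.1 hb
  refine ⟨m, n, ?_, ham, hbn⟩
  rcases lt_trichotomy m n with hmn | rfl | hnm
  · exact hmn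
  · have hbS : b ∈ F.biUnion B := Finset.mem_biUnion.2 ⟨m, hm, hbn⟩
    exact absurd (hST b hbS b hb) (lt_irrefl b)
  · exact absurd (hST a ha b hb) (hB n m hnm b hbn a ham).not_gt

namespace IsIPCollection

variable {I : Set (Finset ℕ)}

theorem nonempty_of_mem (hI : IsIPCollection I) {S : Finset ℕ} (hS : S ∈ I) : S.Nonempty :=
  hI.2.1 S hS

theorem sup_mem (hI : IsIPCollection I) {𝓕 : Finset (Finset ℕ)} (hne : 𝓕.Nonempty)
    (h𝓕 : ↑𝓕 ⊆ I) : 𝓕.sup id ∈ I :=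
  hI.2.2.1 𝓕 hne h𝓕

theorem image {x : ℕ → ℕ} (hI : IsIPCollection I) (hx : Injective x) :
    IsIPCollection (Finset.image x '' I) := by
  obtain ⟨hinf, hne, hsup, D, hDI, hDinf, hDdisj⟩ := hI
  have himage : Injective (Finset.image x) := Finset.image_injective hx
  refine ⟨hinf.image himage.injOn, ?_, ?_,
    Finset.image x '' D, Set.image_mono hDI, hDinf.image himage.injOn, ?_⟩
  · rintro _ ⟨S, hS, rfl⟩
    exact (hne S hS).image x
  · intro 𝓕 h𝓕 hsub
    obtain ⟨𝓖, h𝓖, rfl⟩ := Finset.subset_set_image_iff.1 hsub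
    refine ⟨𝓖.sup id, hsup 𝓖 (Finset.image_nonempty.1 h𝓕) h𝓖, ?_⟩
    simp only [Finset.sup_image, id_comp, Finset.sup_eq_biUnion, Finset.biUnion_image, id]
  · rintro _ ⟨S, hS, rfl⟩ _ ⟨T, hT, rfl⟩ hST
    exact (Finset.disjoint_image hx).2 (hDdisj hS hT (ne_of_apply_ne _ hST))

theorem finiteUnions_subset (hI : IsIPCollection I) {B : ℕ → Finset ℕ} (hB : ∀ n, B n ∈ I) :
    finiteUnions B ⊆ I := by
  rintro _ ⟨F, hF, rfl⟩
  have hsup : (F.image B).sup id ∈ I := hI.sup_mem (Finset.Nonempty.image hF B) <| by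
    rw [Finset.coe_image]
    exact Set.image_subset_iff.2 fun n _ ↦ hB n
  simpa only [Finset.sup_image, id_comp, Finset.sup_eq_biUnion] using hsup

theorem exists_forall_ge (hI : IsIPCollection I) (N : ℕ) : ∃ S ∈ I, ∀ s ∈ S, N ≤ s := by
  obtain ⟨-, -, -, D, hDI, hDinf, hDdisj⟩ := hI
  obtain ⟨S, hS, hSN⟩ :=
    exists_disjoint_of_infinite_of_pairwise_disjoint hDinf hDdisj (Finset.range N)
  exact ⟨S, hDI hS, fun s hs ↦
    not_lt.1 fun hsN ↦ Finset.disjoint_left.1 hSN hs (Finset.mem_range.2 hsN)⟩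

theorem exists_seq_forall_rel (hI : IsIPCollection I) {r : ℕ → ℕ → Prop}
    (hr : ∀ a, ∀ᶠ b in atTop, r a b) :
    ∃ B : ℕ → Finset ℕ, (∀ n, B n ∈ I) ∧ ∀ m n, m < n → ∀ a ∈ B m, ∀ b ∈ B n, r a b := by
  refine exists_seq_of_forall_finset_exists (· ∈ I) (fun P Q ↦ ∀ a ∈ P, ∀ b ∈ Q, r a b) ?_
  intro 𝓑 _
  have hall : ∀ᶠ b in atTop, ∀ P ∈ 𝓑, ∀ a ∈ P, r a b :=
    (Finset.eventually_all 𝓑).2 fun P _ ↦ (Finset.eventually_all P).2 fun a _ ↦ hr a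
  obtain ⟨N, hN⟩ := eventually_atTop.1 hall
  obtain ⟨Q, hQ, hNQ⟩ := hI.exists_forall_ge N
  exact ⟨Q, hQ, fun P hP a ha b hb ↦ hN b (hNQ b hb) P hP a ha⟩

theorem exists_subset_forall_finLT (hI : IsIPCollection I) {p : Finset ℕ → ℕ → Prop}
    (hp : ∀ S ∈ I, ∀ᶠ n in atTop, p S n) :
    ∃ J ⊆ I, IsIPCollection J ∧ ∀ S ∈ J, ∀ T ∈ J, FinLT S T → ∀ t ∈ T, p S t := by
  have hbelow (a : ℕ) : ∀ᶠ b in atTop, a < b ∧ ∀ S ∈ (Finset.Iic a).powerset, S ∈ I → p S b :=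
    (eventually_gt_atTop a).and <| (Finset.eventually_all _).2 fun S _ ↦
      eventually_imp_distrib_left.2 (hp S)
  obtain ⟨B, hBI, hB⟩ := hI.exists_seq_forall_rel hbelow
  have hlt (m n : ℕ) (hmn : m < n) : FinLT (B m) (B n) := fun a ha b hb ↦ (hB m n hmn a ha b hb).1
  have hne (n : ℕ) : (B n).Nonempty := hI.nonempty_of_mem (hBI n)
  have hdisj : Pairwise (Disjoint on B) := (pairwise_disjoint_on B).2 fun m n hmn ↦
    Finset.disjoint_left.2 fun b hbm hbn ↦ (hlt m n hmn b hbm b hbn).false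
  have hJI : finiteUnions B ⊆ I := hI.finiteUnions_subset hBI
  refine ⟨finiteUnions B, hJI, isIPCollection_finiteUnions hne hdisj,
    fun S hS T hT hST t ht ↦ ?_⟩
  have hSne : S.Nonempty := hI.nonempty_of_mem (hJI hS)
  have hSmax : S ∈ (Finset.Iic (S.max' hSne)).powerset :=
    Finset.mem_powerset.2 fun s hs ↦ Finset.mem_Iic.2 (S.le_max' s hs)
  obtain ⟨m, n, hmn, hmax, htn⟩ :=
    exists_lt_mem_mem_of_finLT hlt hS hT hST (S.max'_mem hSne) ht
  exact (hB m n hmn _ hmax t htn).2 S hSmax (hJI hS)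

end IsIPCollection

theorem fut_implies_wfut_two_general {α : Type*} {K : Set α} (hK : K.Finite)
    (fut : ∀ d : Finset ℕ → α, (∀ S : Finset ℕ, S.Nonempty → d S ∈ K) →
      ∃ I c, IsIPCollection I ∧ c ∈ K ∧ ∀ S ∈ I, d S = c)
    (f : Finset ℕ → ℕ → α) (hf : ∀ S n, S.Nonempty → f S n ∈ K) :
    ∃ J c, IsIPCollection J ∧ c ∈ K ∧ ∀ S ∈ J, ∀ T ∈ J, FinLT S T → ∀ t ∈ T, f S t = c := by
  obtain ⟨x, hx, hlim⟩ := exists_strictMono_forall_eventually_eq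
    (fun S : {S : Finset ℕ // S.Nonempty} ↦ f S)
    fun S ↦ hK.subset (Set.range_subset_iff.2 fun n ↦ hf S n S.2)
  have : Nonempty α := ⟨f ∅ 0⟩
  simp only [Subtype.forall] at hlim
  choose! d hd using hlim
  have hdK (S : Finset ℕ) (hS : S.Nonempty) : d S ∈ K := by
    obtain ⟨k, hk⟩ := (hd S hS).exists
    exact hk ▸ hf S (x k) hS
  obtain ⟨I, c, hI, hc, hIc⟩ := fut (fun S ↦ d (S.image x)) fun S hS ↦ hdK _ (hS.image x)
  have hlimc (S) (hS : S ∈ I) : ∀ᶠ k in atTop, f (S.image x) (x k) = c :=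
    hIc S hS ▸ hd _ ((hI.nonempty_of_mem hS).image x)
  obtain ⟨J, -, hJ, hJc⟩ := hI.exists_subset_forall_finLT hlimc
  refine ⟨Finset.image x '' J, c, hJ.image hx.injective, hc, ?_⟩
  rintro _ ⟨S, hS, rfl⟩ _ ⟨T, hT, rfl⟩ hST
  exact Finset.forall_mem_image.2 (hJc S hS T hT ((finLT_image_iff hx).1 hST))

/-- `FUT_ℓ` implies `WFUT²_ℓ`. -/
theorem fut_implies_wfut_two (ℓ : ℕ) (hℓ : 1 ≤ ℓ)
    (fut : ∀ d : Finset ℕ → ℕ, (∀ S : Finset ℕ, S.Nonempty → d S < ℓ) →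
      ∃ (I : Set (Finset ℕ)) (i : ℕ), IsIPCollection I ∧ i < ℓ ∧ ∀ S ∈ I, d S = i) :
    ∀ f : Finset ℕ → ℕ → ℕ, (∀ (S : Finset ℕ) (n : ℕ), S.Nonempty → f S n < ℓ) →
      ∃ (J : Set (Finset ℕ)) (i : ℕ), IsIPCollection J ∧ i < ℓ ∧
        ∀ S ∈ J, ∀ T ∈ J, FinLT S T → f S (sInf (↑T : Set ℕ)) = i := by
  intro f hf
  obtain ⟨J, i, hJ, hi, hJi⟩ := fut_implies_wfut_two_general (Set.finite_Iio ℓ) fut f hf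
  exact ⟨J, i, hJ, hi, fun S hS T hT hST ↦
    hJi S hS T hT hST _ (Nat.sInf_mem (hJ.nonempty_of_mem hT))⟩
end

section
/- For every ℓ ≥ 1 and every coloring f : 𝒫_fin(ℕ) × ℕ → {0,…,ℓ−1}, there exist an IP collection 𝓘 and a color i < ℓ such that f(S, min T) = i for every S, T ∈ 𝓘 with S < T. (The statement WFUT²_ℓ.) -/
/-!
The argument is that of Galvin and Glazer for Hindman's theorem. The sets whose minimum tends to
infinity form a filter which is idempotent for union, so by the Ellis–Numakura lemma it is refined
by an idempotent ultrafilter `U`. Taking the limit of `f S (min T)` along `U`, first in `T` and then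
in `S`, singles out a color `i`. Idempotence of `U` allows one to choose blocks `B 0 < B 1 < ⋯`
such that `f S (min (B n)) = i` whenever `S` is a nonempty union of blocks before `B n`. The finite
unions of blocks form the required IP collection, because the minimum of such a union is the
minimum of its first block.
-/

open Filter

theorem isClosed_setOf_ultrafilter_le {α : Type*} (F : Filter α) :
    IsClosed {U : Ultrafilter α | ↑U ≤ F} := by
  simp only [Filter.le_def, Set.ofPred_forall]
  exact isClosed_biInter fun s _ => ultrafilter_isClosed_basic s

section SupIdempotent

variable {α : Type*} [SemilatticeSup α] {F : Filter α}

/-- A filter is sup-idempotent if it is coarser than its own convolution square with respect to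
`⊔`. For ultrafilters this means being an idempotent of the semigroup of ultrafilters, since there
the two sides can only be comparable when they are equal. -/
def IsSupIdempotent (F : Filter α) : Prop :=
  ∀ P : α → Prop, (∀ᶠ a in F, P a) → ∀ᶠ a in F, ∀ᶠ b in F, P (a ⊔ b)

theorem IsSupIdempotent.exists_ultrafilter_le [F.NeBot] (hF : IsSupIdempotent F) :
    ∃ U : Ultrafilter α, ↑U ≤ F ∧ IsSupIdempotent (U : Filter α) := by
  let _ : Semigroup α := { mul := (· ⊔ ·), mul_assoc := sup_assoc }
  let _ : Semigroup (Ultrafilter α) := Ultrafilter.semigroup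
  have mul_le : ∀ U ∈ {U : Ultrafilter α | ↑U ≤ F}, ∀ V ∈ {V : Ultrafilter α | ↑V ≤ F},
      ↑(U * V) ≤ F := fun U hU V hV s hs =>
    ((hF (· ∈ s) hs).filter_mono hU).mono fun _ h => h.filter_mono hV
  obtain ⟨U, hUF, hUU⟩ := exists_idempotent_in_compact_subsemigroup
    Ultrafilter.continuous_mul_left _ (Ultrafilter.exists_le F)
    (isClosed_setOf_ultrafilter_le F).isCompact mul_le
  refine ⟨U, hUF, fun P hP => ?_⟩
  rwa [← hUU] at hP

theorem exists_seq_forall_finset_sup [OrderBot α] {Q : α → Prop} {r : α → α → Prop} (hbot : Q ⊥)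
    (hstep : ∀ G : Finset α, (∀ a ∈ G, Q a) → ∃ b, ∀ a ∈ G, Q (a ⊔ b) ∧ r a b) :
    ∃ B : ℕ → α, ∀ n, ∀ K ⊆ Finset.range n, r (K.sup B) (B n) := by
  classical
  choose! next hnext using hstep
  let G : ℕ → Finset α := Nat.rec {⊥} fun _ H => H ∪ H.image (· ⊔ next H)
  have forall_mem_G : ∀ n, ∀ a ∈ G n, Q a := by
    intro n
    induction n with
    | zero => exact fun a ha => Finset.mem_singleton.mp ha ▸ hbot
    | succ n ih =>
      intro a ha
      rcases Finset.mem_union.mp ha with ha | ha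
      · exact ih a ha
      · obtain ⟨c, hc, rfl⟩ := Finset.mem_image.mp ha
        exact (hnext (G n) ih c hc).1
  have sup_mem_G : ∀ n, ∀ K ⊆ Finset.range n, K.sup (fun k => next (G k)) ∈ G n := by
    intro n
    induction n with
    | zero => exact fun K hK => by simp [Finset.subset_empty.mp hK, G]
    | succ n ih =>
      intro K hK
      rw [Finset.range_add_one, Finset.subset_insert_iff] at hK
      by_cases hn : n ∈ K
      · refine Finset.mem_union_right _ (Finset.mem_image.mpr ⟨_, ih _ hK, ?_⟩)
        rw [← Finset.insert_erase hn, Finset.sup_insert, sup_comm, Finset.erase_insert_eq_erase,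
          Finset.erase_idem]
      · rw [Finset.erase_eq_of_notMem hn] at hK
        exact Finset.mem_union_left _ (ih K hK)
  exact ⟨fun n => next (G n), fun n K hK =>
    (hnext (G n) (forall_mem_G n) _ (sup_mem_G n K hK)).2⟩

theorem IsSupIdempotent.exists_seq [OrderBot α] [F.NeBot] (hF : IsSupIdempotent F) {P : α → Prop}
    (hP : ∀ᶠ a in F, P a) {r : α → α → Prop} (hr : ∀ a, P a → ∀ᶠ b in F, r a b) :
    ∃ B : ℕ → α, (∀ K : Finset ℕ, K.Nonempty → P (K.sup B)) ∧
      ∀ n, ∀ K ⊆ Finset.range n, K.Nonempty → r (K.sup B) (B n) := by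
  -- The invariant `∀ᶠ b in F, P (a ⊔ b)` holds for `a = ⊥`, and idempotence says that it passes
  -- from `a` to `a ⊔ b` for `F`-almost every `b`.
  obtain ⟨B, hB⟩ : ∃ B : ℕ → α, ∀ n, ∀ K ⊆ Finset.range n,
      P (K.sup B ⊔ B n) ∧ (P (K.sup B) → r (K.sup B) (B n)) := by
    refine exists_seq_forall_finset_sup (Q := fun a => ∀ᶠ b in F, P (a ⊔ b))
      (r := fun a b => P (a ⊔ b) ∧ (P a → r a b)) (by simpa only [bot_sup_eq] using hP) ?_
    intro G hG
    refine Eventually.exists (f := F) ((eventually_all_finset G).mpr fun a ha => ?_)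
    have invariant_sup : ∀ᶠ b in F, ∀ᶠ c in F, P (a ⊔ b ⊔ c) := by
      simpa only [sup_assoc] using hF (fun b => P (a ⊔ b)) (hG a ha)
    have related : ∀ᶠ b in F, P a → r a b := eventually_imp_distrib_left.mpr (hr a)
    exact invariant_sup.and ((hG a ha).and related)
  have sup_mem : ∀ K : Finset ℕ, K.Nonempty → P (K.sup B) := by
    intro K hK
    induction K using Finset.induction_on_max with
    | empty => exact absurd hK Finset.not_nonempty_empty
    | insert n K hlt _ =>
      rw [Finset.sup_insert, sup_comm]
      exact (hB n K fun k hk => Finset.mem_range.mpr (hlt k hk)).1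
  exact ⟨B, sup_mem, fun n K hKn hK => (hB n K hKn).2 (sup_mem K hK)⟩

end SupIdempotent

theorem exists_eventually_eventually_eq {α β κ : Type*} (U : Ultrafilter α) (V : Ultrafilter β)
    {C : Set κ} (hC : C.Finite) {c : α → β → κ} (hc : ∀ᶠ a in U, ∀ᶠ b in V, c a b ∈ C) :
    ∃ i ∈ C, ∀ᶠ a in U, ∀ᶠ b in V, c a b = i := by
  refine (Ultrafilter.eventually_exists_mem_iff hC).mp (hc.mono fun a ha => ?_)
  exact (Ultrafilter.eventually_exists_mem_iff hC).mp (ha.mono fun b hb => ⟨c a b, hb, rfl⟩)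

theorem mem_supClosure_range {ι α : Type*} [SemilatticeSup α] [OrderBot α] {B : ι → α} {a : α} :
    a ∈ supClosure (Set.range B) ↔ ∃ K : Finset ι, K.Nonempty ∧ K.sup B = a := by
  classical
  constructor
  · rintro ⟨t, ht, htB, rfl⟩
    rw [← Set.image_univ, Finset.subset_set_image_iff] at htB
    obtain ⟨K, -, rfl⟩ := htB
    exact ⟨K, ht.of_image, by rw [Finset.sup'_eq_sup, Finset.sup_image, Function.id_comp]⟩
  · rintro ⟨K, hK, rfl⟩
    rw [← Finset.sup'_eq_sup hK]
    exact finsetSup'_mem_supClosure hK fun k _ => Set.mem_range_self k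

/-- The filter of properties of finite sets that hold as soon as the minimum is large. As
`sInf ∅ = 0`, the empty set is excluded by asking for a positive minimum. -/
noncomputable def minAtTop : Filter (Finset ℕ) :=
  comap (fun S => sInf (S : Set ℕ)) atTop

instance minAtTop_neBot : minAtTop.NeBot :=
  atTop_neBot.comap_of_surj fun n => ⟨{n}, by simp⟩

theorem eventually_minAtTop_lt_sInf (n : ℕ) : ∀ᶠ S : Finset ℕ in minAtTop, n < sInf (S : Set ℕ) :=
  tendsto_comap.eventually_gt_atTop n

theorem eventually_minAtTop_nonempty : ∀ᶠ S in minAtTop, S.Nonempty :=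
  (eventually_minAtTop_lt_sInf 0).mono fun _ hS =>
    Finset.coe_nonempty.mp (Nat.nonempty_of_pos_sInf hS)

theorem eventually_minAtTop_finLT (S : Finset ℕ) : ∀ᶠ T in minAtTop, FinLT S T :=
  (eventually_minAtTop_lt_sInf (S.sup id)).mono fun _ hT _ hx _ hy =>
    (Finset.le_sup (f := id) hx).trans_lt (hT.trans_le (Nat.sInf_le hy))

theorem isSupIdempotent_minAtTop : IsSupIdempotent minAtTop := by
  intro P hP
  obtain ⟨n, -, hn⟩ := (atTop_basis.comap _).eventually_iff.mp hP
  have large : ∀ᶠ S : Finset ℕ in minAtTop, S.Nonempty ∧ n ≤ sInf (S : Set ℕ) :=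
    eventually_minAtTop_nonempty.and ((eventually_minAtTop_lt_sInf n).mono fun _ => le_of_lt)
  filter_upwards [large] with S ⟨hS, hnS⟩
  filter_upwards [large] with T ⟨hT, hnT⟩
  apply hn
  rw [Set.mem_preimage, Set.mem_Ici, Finset.sup_eq_union, Finset.coe_union,
    csInf_union (OrderBot.bddBelow _) hS (OrderBot.bddBelow _) hT]
  exact le_inf hnS hnT

namespace FinLT

theorem disjoint {S T : Finset ℕ} (h : FinLT S T) : Disjoint S T :=
  Finset.disjoint_left.mpr fun x hS hT => (h x hS x hT).false

theorem mono {S S' T T' : Finset ℕ} (h : FinLT S T) (hS : S' ⊆ S) (hT : T' ⊆ T) : FinLT S' T' :=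
  fun x hx y hy => h x (hS hx) y (hT hy)

end FinLT

/-- A block sequence: nonempty finite sets, each lying entirely before the next. -/
structure IsBlockSequence (B : ℕ → Finset ℕ) : Prop where
  nonempty : ∀ n, (B n).Nonempty
  finLT : ∀ m n, m < n → FinLT (B m) (B n)

namespace IsBlockSequence

variable {B : ℕ → Finset ℕ}

theorem pairwise_disjoint (hB : IsBlockSequence B) : Pairwise (Function.onFun Disjoint B) :=
  (pairwise_disjoint_on B).mpr fun m n hmn => (hB.finLT m n hmn).disjoint

theorem injective (hB : IsBlockSequence B) : Function.Injective B :=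
  Function.Injective.of_lt_imp_ne fun m n hmn =>
    (hB.finLT m n hmn).disjoint.ne (hB.nonempty m).ne_empty

theorem lt_of_finLT (hB : IsBlockSequence B) {m n : ℕ} (h : FinLT (B m) (B n)) : m < n := by
  obtain ⟨x, hx⟩ := hB.nonempty m
  obtain ⟨y, hy⟩ := hB.nonempty n
  have hxy : x < y := h x hx y hy
  rcases lt_trichotomy m n with hmn | rfl | hnm
  · exact hmn
  · exact absurd (h x hx x hx) (lt_irrefl x)
  · exact absurd (hB.finLT n m hnm y hy x hx) hxy.asymm

theorem sInf_sup (hB : IsBlockSequence B) {K : Finset ℕ} (hK : K.Nonempty) :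
    sInf (↑(K.sup B) : Set ℕ) = sInf (B (K.min' hK) : Set ℕ) := by
  have hmem : sInf (B (K.min' hK) : Set ℕ) ∈ B (K.min' hK) := Nat.sInf_mem (hB.nonempty _)
  refine IsLeast.csInf_eq ⟨Finset.le_sup (f := B) (K.min'_mem hK) hmem, fun x hx => ?_⟩
  obtain ⟨k, hk, hxk⟩ := Finset.mem_sup.mp hx
  rcases (K.min'_le k hk).eq_or_lt with heq | hlt
  · exact Nat.sInf_le (heq ▸ hxk)
  · exact (hB.finLT _ k hlt _ hmem x hxk).le

theorem subset_range_min'_of_finLT (hB : IsBlockSequence B) {J K : Finset ℕ}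
    (hK : K.Nonempty) (h : FinLT (J.sup B) (K.sup B)) : J ⊆ Finset.range (K.min' hK) := fun _ hj =>
  Finset.mem_range.mpr <| hB.lt_of_finLT <|
    h.mono (Finset.le_sup (f := B) hj) (Finset.le_sup (f := B) (K.min'_mem hK))

theorem isIPCollection_supClosure_range (hB : IsBlockSequence B) :
    IsIPCollection (supClosure (Set.range B)) := by
  have infinite_range : (Set.range B).Infinite := Set.infinite_range_of_injective hB.injective
  refine ⟨infinite_range.mono subset_supClosure, ?_, ?_, Set.range B, subset_supClosure,
    infinite_range, hB.pairwise_disjoint.range_pairwise⟩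
  · intro S hS
    obtain ⟨K, ⟨k, hk⟩, rfl⟩ := mem_supClosure_range.mp hS
    exact (hB.nonempty k).mono (Finset.le_sup (f := B) hk)
  · intro 𝓕 h𝓕 hsub
    rw [← Finset.sup'_eq_sup h𝓕]
    exact supClosed_supClosure.finsetSup'_mem h𝓕 hsub

end IsBlockSequence

theorem exists_isBlockSequence_forall_eq {κ : Type*} {C : Set κ} (hC : C.Finite)
    {f : Finset ℕ → ℕ → κ} (hf : ∀ (S : Finset ℕ) (n : ℕ), S.Nonempty → f S n ∈ C) :
    ∃ i ∈ C, ∃ B, IsBlockSequence B ∧ ∀ n, ∀ J ⊆ Finset.range n, J.Nonempty →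
      f (J.sup B) (sInf (B n : Set ℕ)) = i := by
  obtain ⟨U, hU, hidem⟩ := isSupIdempotent_minAtTop.exists_ultrafilter_le
  have nonempty : ∀ᶠ S : Finset ℕ in U, S.Nonempty := eventually_minAtTop_nonempty.filter_mono hU
  obtain ⟨i, hi, hlim⟩ := exists_eventually_eventually_eq U U hC
    (c := fun S T => f S (sInf (T : Set ℕ)))
    (nonempty.mono fun S hS => Eventually.of_forall fun T => hf S _ hS)
  obtain ⟨B, hlarge, hrel⟩ := hidem.exists_seq (nonempty.and hlim)
    (r := fun S T => FinLT S T ∧ f S (sInf (T : Set ℕ)) = i)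
    fun S hS => ((eventually_minAtTop_finLT S).filter_mono hU).and hS.2
  have isBlockSequence : IsBlockSequence B :=
    { nonempty := fun n => by simpa only [Finset.sup_singleton] using
        (hlarge {n} (Finset.singleton_nonempty n)).1
      finLT := fun m n hmn => by simpa only [Finset.sup_singleton] using
        (hrel n {m} (by simpa using hmn) (Finset.singleton_nonempty m)).1 }
  exact ⟨i, hi, B, isBlockSequence, fun n J hJn hJ => (hrel n J hJn hJ).2⟩

/-- The statement `WFUT²_ℓ`. -/
theorem wfut_two (ℓ : ℕ) (hℓ : 1 ≤ ℓ) (f : Finset ℕ → ℕ → ℕ)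
    (hf : ∀ (S : Finset ℕ) (n : ℕ), S.Nonempty → f S n < ℓ) :
    ∃ (I : Set (Finset ℕ)) (i : ℕ), IsIPCollection I ∧ i < ℓ ∧
      ∀ S ∈ I, ∀ T ∈ I, FinLT S T → f S (sInf (↑T : Set ℕ)) = i := by
  obtain ⟨i, hi, B, hB, hcolor⟩ := exists_isBlockSequence_forall_eq (Set.finite_Iio ℓ) hf
  refine ⟨supClosure (Set.range B), i, hB.isIPCollection_supClosure_range, hi, ?_⟩
  intro S hS T hT hST
  obtain ⟨J, hJ, rfl⟩ := mem_supClosure_range.mp hS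
  obtain ⟨K, hK, rfl⟩ := mem_supClosure_range.mp hT
  rw [hB.sInf_sup hK]
  exact hcolor _ J (hB.subset_range_min'_of_finLT hK hST) hJ
end

section
/- For every ℓ ≥ 1 and every coloring d : 𝒫_fin(ℕ) → {0,…,ℓ−1}, there exist an IP collection 𝓘 and a color i < ℓ such that d(S) = i for all S ∈ 𝓘. (The Finite Union Theorem FUT_ℓ.) -/
/-!
Hindman's theorem for the semigroup of finite sets under union is not enough, since the sequence it
provides may be constant. Encode finite sets instead as duplicate-free multisets under addition.
Finite sums of distinct singletons are nonempty and duplicate-free, so Hindman's theorem yields a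
sequence of multisets all of whose finite sums represent nonempty sets of one colour. A sum of two
multisets is duplicate-free only if they are disjoint, so the terms of the new sequence are pairwise
disjoint and its finite sums are finite unions.
-/

open Function

theorem exists_finsetSum_eq_of_mem_FS {M : Type*} [AddCommMonoid M] {a : Stream' M} {m : M}
    (hm : m ∈ Hindman.FS a) : ∃ s : Finset ℕ, s.Nonempty ∧ ∑ i ∈ s, a.get i = m := by
  let succ : ℕ ↪ ℕ := ⟨Nat.succ, Nat.succ_injective⟩
  induction hm with
  | head' a => exact ⟨{0}, Finset.singleton_nonempty 0, Finset.sum_singleton _ _⟩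
  | tail' a m _ ih =>
    obtain ⟨s, hs, rfl⟩ := ih
    exact ⟨s.map succ, hs.map, Finset.sum_map _ _ _⟩
  | cons' a m _ ih =>
    obtain ⟨s, -, rfl⟩ := ih
    have zero_notMem : 0 ∉ s.map succ := by simp [succ]
    refine ⟨Finset.cons 0 (s.map succ) zero_notMem, Finset.cons_nonempty zero_notMem, ?_⟩
    rw [Finset.sum_cons, Finset.sum_map]
    rfl

theorem mem_supClosure_range_iff {ι L : Type*} [SemilatticeSup L] [OrderBot L] {f : ι → L}
    {x : L} : x ∈ supClosure (Set.range f) ↔ ∃ s : Finset ι, s.Nonempty ∧ s.sup f = x := by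
  classical
  constructor
  · rintro ⟨t, ht, ht_range, rfl⟩
    rw [← Set.image_univ, Finset.subset_set_image_iff] at ht_range
    obtain ⟨s, -, rfl⟩ := ht_range
    exact ⟨s, ht.of_image, by rw [Finset.sup'_eq_sup, Finset.sup_image, id_comp]⟩
  · rintro ⟨s, hs, rfl⟩
    rw [← Finset.sup'_eq_sup hs]
    exact finsetSup'_mem_supClosure hs fun i _ ↦ Set.mem_range_self i

theorem injective_of_pairwise_disjoint {ι L : Type*} [PartialOrder L] [OrderBot L] {f : ι → L}
    (hf : ∀ i, f i ≠ ⊥) (hdisj : Pairwise (Disjoint on f)) : Injective f :=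
  injective_iff_pairwise_ne.2 fun i _ hij ↦ (hdisj hij).ne (hf i)

section FinsetVal

variable {α : Type*}

theorem exists_nonempty_val_eq_of_mem_FS_singleton {f : ℕ → α} (hf : Injective f)
    {m : Multiset α} (hm : m ∈ Hindman.FS (fun n ↦ {f n} : Stream' (Multiset α))) :
    ∃ S : Finset α, S.Nonempty ∧ S.val = m := by
  obtain ⟨s, hs, rfl⟩ := exists_finsetSum_eq_of_mem_FS hm
  refine ⟨s.map ⟨f, hf⟩, hs.map, ?_⟩
  calc (s.map ⟨f, hf⟩).val = ∑ n ∈ s.map ⟨f, hf⟩, {n} := (Finset.sum_multiset_singleton _).symm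
    _ = ∑ n ∈ s, {f n} := Finset.sum_map _ _ _

theorem disjoint_of_val_add_val_eq_val {S T U : Finset α} (h : S.val + T.val = U.val) :
    Disjoint S T :=
  Finset.disjoint_val.1 (Multiset.nodup_add.1 (h ▸ U.nodup)).2.2

theorem sup_eq_of_sum_val_eq_val [DecidableEq α] {ι : Type*} {B : ι → Finset α} {s : Finset ι}
    {S : Finset α} (h : ∑ i ∈ s, (B i).val = S.val) : s.sup B = S := by
  ext x
  rw [Finset.mem_sup, ← Finset.mem_val (s := S), ← h, Multiset.mem_sum]
  rfl

end FinsetVal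

theorem finite_union_theorem_general {α κ : Type*} [Infinite α] [DecidableEq α] {K : Set κ}
    (hK : K.Finite) (c : Finset α → κ) (hc : ∀ S : Finset α, S.Nonempty → c S ∈ K) :
    ∃ B : ℕ → Finset α, (∀ n, (B n).Nonempty) ∧ Pairwise (Disjoint on B) ∧
      ∃ k ∈ K, ∀ S ∈ supClosure (Set.range B), c S = k := by
  let colorClass (k : κ) : Set (Multiset α) := Finset.val '' {S | S.Nonempty ∧ c S = k}
  let f := Infinite.natEmbedding α
  have cover : Hindman.FS (fun n ↦ {f n} : Stream' (Multiset α)) ⊆ ⋃₀ (colorClass '' K) := by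
    intro m hm
    obtain ⟨S, hS, rfl⟩ := exists_nonempty_val_eq_of_mem_FS_singleton f.injective hm
    exact ⟨colorClass (c S), ⟨c S, hc S hS, rfl⟩, S, ⟨hS, rfl⟩, rfl⟩
  obtain ⟨_, ⟨k, hk, rfl⟩, b, hb⟩ := Hindman.FS_partition_regular _ _ (hK.image colorClass) cover
  choose B hB hBb using fun n ↦ hb (Hindman.FS.singleton b n)
  refine ⟨B, fun n ↦ (hB n).1, ?_, k, hk, fun S hS ↦ ?_⟩
  · refine (pairwise_disjoint_on B).2 fun m n hmn ↦ ?_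
    obtain ⟨U, -, hU⟩ := hb (Hindman.FS.add_two b m n hmn)
    exact disjoint_of_val_add_val_eq_val (U := U) (by rw [hBb, hBb, hU])
  · obtain ⟨s, hs, rfl⟩ := mem_supClosure_range_iff.1 hS
    obtain ⟨U, ⟨-, hUk⟩, hU⟩ := hb (Hindman.FS.finsetSum b s hs)
    rwa [sup_eq_of_sum_val_eq_val (S := U) (by simp only [hBb, hU])]

theorem isIPCollection_supClosure_range {ι : Type*} [Infinite ι] {B : ι → Finset ℕ}
    (hne : ∀ i, (B i).Nonempty) (hdisj : Pairwise (Disjoint on B)) :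
    IsIPCollection (supClosure (Set.range B)) := by
  have hinj : Injective B := injective_of_pairwise_disjoint (fun i ↦ (hne i).ne_empty) hdisj
  have range_infinite : (Set.range B).Infinite := Set.infinite_range_of_injective hinj
  refine ⟨range_infinite.mono subset_supClosure, fun S hS ↦ ?_, fun 𝓕 h𝓕 h𝓕I ↦ ?_,
    Set.range B, subset_supClosure, range_infinite, hdisj.range_pairwise⟩
  · obtain ⟨s, ⟨i, hi⟩, rfl⟩ := mem_supClosure_range_iff.1 hS
    exact (hne i).mono (Finset.le_sup (f := B) hi)
  · rw [← Finset.sup'_eq_sup h𝓕]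
    exact supClosed_supClosure.finsetSup'_mem h𝓕 h𝓕I

/-- The Finite Union Theorem `FUT_ℓ`. -/
theorem finite_union_theorem (ℓ : ℕ) (hℓ : 1 ≤ ℓ) (d : Finset ℕ → ℕ)
    (hd : ∀ S : Finset ℕ, S.Nonempty → d S < ℓ) :
    ∃ (I : Set (Finset ℕ)) (i : ℕ), IsIPCollection I ∧ i < ℓ ∧ ∀ S ∈ I, d S = i := by
  obtain ⟨B, hne, hdisj, i, hi, hmono⟩ := finite_union_theorem_general (Set.finite_Iio ℓ) d hd
  exact ⟨supClosure (Set.range B), i, isIPCollection_supClosure_range hne hdisj, hi, hmono⟩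
end

section
/- Let ℓ ≥ 1, let c̃ : 2^{<ω} → {0,…,ℓ−1} be a coloring of the finite binary strings, and let ρ be a binary string. Then there exist a nonempty set of colors L ⊆ {0,…,ℓ−1} and binary strings τ^η, one for each nonempty string η over the alphabet L of length at most |L|+1, such that, setting η̃ to be the constant string (max L, …, max L) of length |L|+1 and ρ̃ = τ^{η̃} followed by one bit 0, the following hold: (1) ρ is a proper prefix of τ^η for every η of length 1, and for all indices η, β, τ^η is a proper prefix of τ^β if and only if η strictly precedes β in the shortlex order (shorter strings first, strings of equal length compared lexicographically); (2) ρ̃(|τ^η|) = 0 for every index η; (3) for every 0 ≤ i ≤ |L| and every η over L of length i+1, letting η_0 ≺ η_1 ≺ ⋯ ≺ η_{i−1} be the nonempty proper prefixes of η and Q = {|τ^{η_0}|, …, |τ^{η_{i−1}}|} (with Q = ∅ when i = 0), one has c̃((τ^η)_Q) = η(i); (4) letting P = {|τ^η| : η a nonempty string over L of length at most |L|+1}, for every subset Q of P and every binary string τ having ρ̃ as a (not necessarily proper) prefix, c̃(τ_Q) ∈ L. -/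
/-- `ValidIdx L η`: `η` is a nonempty string over the alphabet `L` of length at most
`|L| + 1`. -/
def ValidIdx (L : Finset ℕ) (η : List ℕ) : Prop :=
  η ≠ [] ∧ η.length ≤ L.card + 1 ∧ ∀ x ∈ η, x ∈ L

/-- Shortlex order on strings of naturals: shorter strings first, strings of equal length
compared lexicographically. -/
def ShortLex (η β : List ℕ) : Prop :=
  η.length < β.length ∨ (η.length = β.length ∧ List.Lex (· < ·) η β)

/-- `ρ̃`: the string `τ^{η̃}` followed by one bit `0`, where `η̃` is the constant string
`(max L, …, max L)` of length `|L| + 1`. -/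
noncomputable def rhoTilde (L : Finset ℕ) (τ : List ℕ → List Bool) : List Bool :=
  τ (List.replicate (L.card + 1) (sSup (↑L : Set ℕ))) ++ [false]

/-!
Pass to an extension `ρ'` of `ρ ++ [0]` for which the set `L` of colors occurring above `ρ'` is
minimal under inclusion; then every color of `L` occurs above every extension of `ρ'`. Flipping at
positions `≥ |ρ'|` maps the extensions of `ρ'` onto themselves, so even after any such flips all
colors stay in `L` and each color of `L` can still be reached by extending. One therefore defines
the `τ^η` in shortlex order: having placed all earlier strings, append `0` to the last one and
extend until the string flipped at the lengths already assigned to the proper prefixes of `η` gets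
the color required by `η`.
-/

section Flip

variable {ρ σ τ : List Bool} {F : Finset ℕ}

theorem flipStr_flipStr (σ : List Bool) (F : Finset ℕ) : flipStr (flipStr σ F) F = σ := by
  refine List.ext_getElem (by simp [flipStr]) fun i _ _ => ?_
  simp only [flipStr, List.getElem_mapIdx]
  split <;> simp

theorem flipStr_prefix_flipStr (h : σ <+: τ) (F : Finset ℕ) : flipStr σ F <+: flipStr τ F := by
  obtain ⟨t, rfl⟩ := h
  simp only [flipStr, List.mapIdx_append, List.prefix_append]

theorem flipStr_eq_self (hF : ∀ q ∈ F, σ.length ≤ q) : flipStr σ F = σ := by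
  refine List.ext_getElem (by simp [flipStr]) fun i _ hi => ?_
  simp only [flipStr, List.getElem_mapIdx]
  exact if_neg fun hiF => (hF i hiF).not_gt hi

theorem prefix_flipStr (hF : ∀ q ∈ F, ρ.length ≤ q) (h : ρ <+: σ) : ρ <+: flipStr σ F := by
  simpa only [flipStr_eq_self hF] using flipStr_prefix_flipStr h F

end Flip

section ColorStable

variable {α γ : Type*}

/-- The set of colors that `c` takes on the (not necessarily proper) extensions of `σ`. -/
def extColors (c : List α → γ) (σ : List α) : Set γ := c '' {τ | σ <+: τ}

/-- The string `ρ` is stable for the coloring `c` if no color occurring above `ρ` can be avoided by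
passing to an extension of `ρ`. -/
def IsColorStable (c : List α → γ) (ρ : List α) : Prop :=
  ∀ ⦃σ⦄, ρ <+: σ → extColors c ρ ⊆ extColors c σ

theorem extColors_subset_of_prefix (c : List α → γ) {ρ σ : List α} (h : ρ <+: σ) :
    extColors c σ ⊆ extColors c ρ :=
  Set.image_mono fun _ => h.trans

theorem finite_extColors {c : List α → γ} (hc : (Set.range c).Finite) (σ : List α) :
    (extColors c σ).Finite :=
  hc.subset (Set.image_subset_range _ _)

theorem exists_isColorStable {c : List α → γ} (hc : (Set.range c).Finite) (ρ : List α) :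
    ∃ ρ', ρ <+: ρ' ∧ IsColorStable c ρ' := by
  have finite_image : (extColors c '' {σ | ρ <+: σ}).Finite :=
    hc.finite_subsets.subset <| Set.image_subset_iff.2 fun _ _ => Set.image_subset_range _ _
  obtain ⟨ρ', hρ', minimal⟩ :=
    Set.Finite.exists_minimalFor' _ _ finite_image ⟨ρ, List.prefix_rfl⟩
  exact ⟨ρ', hρ', fun σ hσ => minimal (hρ'.trans hσ) (extColors_subset_of_prefix c hσ)⟩

theorem IsColorStable.exists_prefix_color_flipStr {c : List Bool → γ} {ρ σ : List Bool}
    {F : Finset ℕ} {x : γ} (hρ : IsColorStable c ρ) (hσ : ρ <+: σ)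
    (hF : ∀ q ∈ F, ρ.length ≤ q) (hx : x ∈ extColors c ρ) :
    ∃ τ, σ <+: τ ∧ c (flipStr τ F) = x := by
  obtain ⟨τ, hτ, rfl⟩ := hρ (prefix_flipStr hF hσ) hx
  refine ⟨flipStr τ F, ?_, by rw [flipStr_flipStr]⟩
  simpa only [flipStr_flipStr] using flipStr_prefix_flipStr hτ F

end ColorStable

section MarkedChain

variable {α ι κ : Type*} [LinearOrder κ] {key : ι → κ} {s : Set ι} {b : α} {τ : ι → List α}

theorem ne_of_append_singleton_prefix {σ τ : List α} (h : σ ++ [b] <+: τ) : σ ≠ τ := by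
  rintro rfl
  simpa using h.length_le

theorem getD_length_of_append_singleton_prefix {σ τ : List α} (h : σ ++ [b] <+: τ) (d : α) :
    τ.getD σ.length d = b := by
  obtain ⟨t, rfl⟩ := h
  simp

/-- The strings `τ i`, `i ∈ s`, form a chain under the prefix order, arranged in the order of the
keys, in which every member is followed by the letter `b` inside all later ones. The order of the
indices is pulled back along `key` because the chain of the theorem is ordered by shortlex, which
is not the order instance on lists. -/
def IsMarkedChainOn (key : ι → κ) (s : Set ι) (b : α) (τ : ι → List α) : Prop :=
  ∀ ⦃i⦄, i ∈ s → ∀ ⦃j⦄, j ∈ s → key i < key j → τ i ++ [b] <+: τ j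

theorem IsMarkedChainOn.prefix_and_ne_iff (hτ : IsMarkedChainOn key s b τ)
    (hkey : Set.InjOn key s) {i j : ι} (hi : i ∈ s) (hj : j ∈ s) :
    τ i <+: τ j ∧ τ i ≠ τ j ↔ key i < key j := by
  constructor
  · rintro ⟨hpre, hne⟩
    by_contra! hle
    rcases hle.lt_or_eq with hlt | heq
    · have hpre' : τ j <+: τ i := (List.prefix_append _ _).trans (hτ hj hi hlt)
      exact hne (hpre.eq_of_length_le hpre'.length_le)
    · exact hne (congrArg τ (hkey hi hj heq.symm))
  · intro hlt
    have happ := hτ hi hj hlt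
    exact ⟨(List.prefix_append _ _).trans happ, ne_of_append_singleton_prefix happ⟩

theorem IsMarkedChainOn.append_prefix_append (hτ : IsMarkedChainOn key s b τ)
    (hkey : Set.InjOn key s) {i j : ι} (hi : i ∈ s) (hj : j ∈ s) (hij : key i ≤ key j) :
    τ i ++ [b] <+: τ j ++ [b] := by
  rcases hij.lt_or_eq with hlt | heq
  · exact (hτ hi hj hlt).trans (List.prefix_append _ _)
  · rw [hkey hi hj heq]

theorem IsMarkedChainOn.insert_update [DecidableEq ι] (hτ : IsMarkedChainOn key s b τ) {a : ι}
    (ha : a ∉ s) (hmax : ∀ i ∈ s, key i ≤ key a) {υ : List α} (hυ : ∀ i ∈ s, τ i ++ [b] <+: υ) :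
    IsMarkedChainOn key (insert a s) b (Function.update τ a υ) := by
  have update_eq {i : ι} (hi : i ∈ s) : Function.update τ a υ i = τ i :=
    Function.update_of_ne (ne_of_mem_of_not_mem hi ha) _ _
  rintro i (rfl | hi) j (rfl | hj) hij
  · exact absurd hij (lt_irrefl _)
  · exact absurd hij (hmax j hj).not_gt
  · simpa only [Function.update_self, update_eq hi] using hυ i hi
  · simpa only [update_eq hi, update_eq hj] using hτ hi hj hij

end MarkedChain

section Lengths

variable {α ι : Type*}

/-- The set of positions `|τ j|` for `j ∈ J`. -/
def lengthsOn (τ : ι → List α) (J : Finset ι) : Finset ℕ := J.image fun j => (τ j).length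

variable {τ : ι → List α} {J : Finset ι}

theorem lengthsOn_update_of_notMem [DecidableEq ι] {a : ι} (ha : a ∉ J) (υ : List α) :
    lengthsOn (Function.update τ a υ) J = lengthsOn τ J :=
  Finset.image_congr fun _ hj =>
    congrArg List.length (Function.update_of_ne (ne_of_mem_of_not_mem hj ha) _ _)

theorem length_le_of_mem_lengthsOn {ρ : List α} (hτ : ∀ i, ρ <+: τ i) :
    ∀ q ∈ lengthsOn τ J, ρ.length ≤ q :=
  Finset.forall_mem_image.2 fun j _ => (hτ j).length_le

end Lengths

section Construction

variable {γ ι κ : Type*} [LinearOrder κ] {c : List Bool → γ} {ρ : List Bool} {key : ι → κ}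
  {pred : ι → Finset ι} {x : ι → γ}

theorem IsColorStable.exists_isMarkedChainOn (hρ : IsColorStable c ρ)
    (hpred : ∀ i, ∀ j ∈ pred i, key j < key i) (b : Bool) {s : Set ι} (hs : s.Finite)
    (hx : ∀ i ∈ s, x i ∈ extColors c ρ) :
    ∃ τ : ι → List Bool, (∀ i, ρ <+: τ i) ∧ IsMarkedChainOn key s b τ ∧
      ∀ i ∈ s, c (flipStr (τ i) (lengthsOn τ (pred i))) = x i := by
  classical
  lift s to Finset ι using hs
  -- The string `σ` bounds the chain built so far and is the one to be extended next.
  suffices ∃ (τ : ι → List Bool) (σ : List Bool),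
      (∀ i, ρ <+: τ i) ∧ IsMarkedChainOn key s b τ ∧
      (∀ i ∈ s, c (flipStr (τ i) (lengthsOn τ (pred i))) = x i) ∧
      ρ <+: σ ∧ ∀ i ∈ s, τ i ++ [b] <+: σ by
    obtain ⟨τ, -, hbase, hchain, hcolor, -⟩ := this
    exact ⟨τ, hbase, hchain, hcolor⟩
  induction s using Finset.induction_on_max_value key with
  | empty => exact ⟨fun _ => ρ, ρ, by simp [IsMarkedChainOn]⟩
  | insert a s ha hmax ih =>
    obtain ⟨τ, σ, hbase, hchain, hcolor, hσ, hend⟩ :=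
      ih fun i hi => hx i (Finset.mem_insert_of_mem hi)
    obtain ⟨υ, hυ, hcolor_υ⟩ := hρ.exists_prefix_color_flipStr hσ
      (length_le_of_mem_lengthsOn hbase (J := pred a)) (hx a (Finset.mem_insert_self a s))
    have update_eq {i : ι} (hi : i ∈ s) : Function.update τ a υ i = τ i :=
      Function.update_of_ne (ne_of_mem_of_not_mem hi ha) _ _
    have notMem_pred {i : ι} (hi : key i ≤ key a) : a ∉ pred i :=
      fun hmem => (hpred i a hmem).not_ge hi
    refine ⟨Function.update τ a υ, υ ++ [b], ?_, ?_, ?_, ?_, ?_⟩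
    · exact Function.forall_update_iff τ (fun _ υ => ρ <+: υ) |>.2
        ⟨hσ.trans hυ, fun i _ => hbase i⟩
    · rw [Finset.coe_insert]
      exact hchain.insert_update ha hmax fun i hi => (hend i hi).trans hυ
    · refine Finset.forall_mem_insert .. |>.2 ⟨?_, fun i hi => ?_⟩
      · rwa [lengthsOn_update_of_notMem (notMem_pred le_rfl), Function.update_self]
      · rw [lengthsOn_update_of_notMem (notMem_pred (hmax i hi)), update_eq hi, hcolor i hi]
    · exact hσ.trans (hυ.trans (List.prefix_append _ _))
    · refine Finset.forall_mem_insert .. |>.2 ⟨by rw [Function.update_self], fun i hi => ?_⟩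
      rw [update_eq hi]
      exact (hend i hi).trans (hυ.trans (List.prefix_append _ _))

end Construction

section Shortlex

variable {α : Type*}

/-- The embedding of strings into `ℕ ×ₗ List α` along which the lexicographic order pulls back to
the shortlex order. -/
def shortlexKey (η : List α) : ℕ ×ₗ List α := toLex (η.length, η)

theorem shortlexKey_injective : Function.Injective (shortlexKey (α := α)) :=
  fun _ _ h => congrArg (fun k => (ofLex k).2) h

theorem shortLex_iff_shortlexKey_lt {η β : List ℕ} :
    ShortLex η β ↔ shortlexKey η < shortlexKey β :=
  (Prod.Lex.toLex_lt_toLex (x := (η.length, η)) (y := (β.length, β))).symm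

theorem shortlexKey_lt_of_length_lt [LT α] {η β : List α} (h : η.length < β.length) :
    shortlexKey η < shortlexKey β :=
  Prod.Lex.toLex_lt_toLex.2 (Or.inl h)

theorem le_replicate_length [LinearOrder α] {M : α} {η : List α} (h : ∀ x ∈ η, x ≤ M) :
    η ≤ List.replicate η.length M := by
  induction η with
  | nil => exact le_rfl
  | cons x η ih =>
    obtain ⟨hx, hη⟩ := List.forall_mem_cons.1 h
    rw [List.length_cons, List.replicate_succ, ← not_lt, List.cons_lt_cons_iff]
    rintro (hMx | ⟨-, hlt⟩)
    · exact hMx.not_ge hx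
    · exact hlt.not_ge (ih hη)

theorem shortlexKey_le_replicate [LinearOrder α] {M : α} {η : List α} (h : ∀ x ∈ η, x ≤ M)
    {n : ℕ} (hn : η.length ≤ n) : shortlexKey η ≤ shortlexKey (List.replicate n M) := by
  rcases hn.lt_or_eq with hlt | rfl
  · exact (shortlexKey_lt_of_length_lt (by rwa [List.length_replicate])).le
  · exact Prod.Lex.toLex_le_toLex.2 (Or.inr ⟨by simp, le_replicate_length h⟩)

/-- The nonempty proper prefixes of `η`; the one of length `j + 1` is `η_j` in the paper. -/
def properPrefixes [DecidableEq α] (η : List α) : Finset (List α) :=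
  (Finset.range (η.length - 1)).image fun j => η.take (j + 1)

theorem shortlexKey_lt_of_mem_properPrefixes [DecidableEq α] [LT α] (η : List α) :
    ∀ β ∈ properPrefixes η, shortlexKey β < shortlexKey η := by
  refine Finset.forall_mem_image.2 fun j hj => shortlexKey_lt_of_length_lt ?_
  rw [Finset.mem_range] at hj
  rw [List.length_take]
  omega

theorem lengthsOn_properPrefixes {β : Type*} [DecidableEq α] (τ : List α → List β) (η : List α) :
    lengthsOn τ (properPrefixes η) =
      (Finset.range (η.length - 1)).image fun j => (τ (η.take (j + 1))).length :=
  Finset.image_image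

end Shortlex

section ValidIdx

variable {L : Finset ℕ} {η : List ℕ}

theorem finite_setOf_validIdx (L : Finset ℕ) : {η | ValidIdx L η}.Finite := by
  refine ((List.finite_length_le L (L.card + 1)).image (List.map (↑))).subset ?_
  rintro η ⟨-, hlen, hL⟩
  exact ⟨η.attachWith (· ∈ L) hL, by simpa using hlen, by simp⟩

theorem ValidIdx.getD_length_sub_one_mem (hη : ValidIdx L η) :
    η.getD (η.length - 1) 0 ∈ L := by
  rw [List.getD_eq_getElem _ _ (Nat.sub_one_lt (mt List.length_eq_zero_iff.1 hη.1))]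
  exact hη.2.2 _ (List.getElem_mem _)

theorem validIdx_replicate_sSup (hL : L.Nonempty) :
    ValidIdx L (List.replicate (L.card + 1) (sSup (L : Set ℕ))) := by
  refine ⟨by simp, by simp, fun x hx => ?_⟩
  rw [List.eq_of_mem_replicate hx]
  exact hL.csSup_mem

theorem ValidIdx.shortlexKey_le (hη : ValidIdx L η) :
    shortlexKey η ≤ shortlexKey (List.replicate (L.card + 1) (sSup (L : Set ℕ))) :=
  shortlexKey_le_replicate (fun x hx => le_csSup L.bddAbove (hη.2.2 x hx)) hη.2.1

theorem IsMarkedChainOn.append_prefix_rhoTilde {τ : List ℕ → List Bool}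
    (hτ : IsMarkedChainOn shortlexKey {η | ValidIdx L η} false τ) (hη : ValidIdx L η) :
    τ η ++ [false] <+: rhoTilde L τ :=
  have hL : L.Nonempty := ⟨_, hη.getD_length_sub_one_mem⟩
  hτ.append_prefix_append shortlexKey_injective.injOn hη (validIdx_replicate_sSup hL)
    hη.shortlexKey_le

theorem prefix_rhoTilde {ρ : List Bool} {τ : List ℕ → List Bool} (hτ : ∀ η, ρ <+: τ η)
    (L : Finset ℕ) : ρ <+: rhoTilde L τ :=
  (hτ _).trans (List.prefix_append _ _)

end ValidIdx

/-- The technical lemma (Lemma 3.4 of the paper). -/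
theorem ovw_claim1 (ℓ : ℕ) (hℓ : 1 ≤ ℓ) (ctilde : List Bool → ℕ)
    (hc : ∀ σ, ctilde σ < ℓ) (ρ : List Bool) :
    ∃ (L : Finset ℕ) (τ : List ℕ → List Bool),
      L.Nonempty ∧ (∀ x ∈ L, x < ℓ) ∧
      -- (1)
      (∀ η, ValidIdx L η → η.length = 1 → ρ <+: τ η ∧ ρ ≠ τ η) ∧
      (∀ η β, ValidIdx L η → ValidIdx L β →
        ((τ η <+: τ β ∧ τ η ≠ τ β) ↔ ShortLex η β)) ∧
      -- (2)
      (∀ η, ValidIdx L η → (rhoTilde L τ).getD (τ η).length true = false) ∧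
      -- (3)
      (∀ η, ValidIdx L η →
        ctilde (flipStr (τ η)
            ((Finset.range (η.length - 1)).image fun j => (τ (η.take (j + 1))).length))
          = η.getD (η.length - 1) 0) ∧
      -- (4)
      (∀ Q : Finset ℕ, (∀ q ∈ Q, ∃ η, ValidIdx L η ∧ q = (τ η).length) →
        ∀ σ : List Bool, rhoTilde L τ <+: σ → ctilde (flipStr σ Q) ∈ L) := by
  have hfin : (Set.range ctilde).Finite :=
    (Set.finite_lt_nat ℓ).subset (Set.range_subset_iff.2 hc)
  obtain ⟨ρ', hρ', hstable⟩ := exists_isColorStable hfin (ρ ++ [false])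
  obtain ⟨L, mem_L⟩ := (finite_extColors hfin ρ').exists_finset
  have color_mem_L {σ : List Bool} (hσ : ρ' <+: σ) : ctilde σ ∈ L :=
    (mem_L _).2 (Set.mem_image_of_mem ctilde hσ)
  obtain ⟨τ, hbase, hchain, hcolor⟩ :=
    hstable.exists_isMarkedChainOn shortlexKey_lt_of_mem_properPrefixes false
      (finite_setOf_validIdx L) fun η hη => (mem_L _).1 (ValidIdx.getD_length_sub_one_mem hη)
  refine ⟨L, τ, ⟨_, color_mem_L List.prefix_rfl⟩, ?_, ?_, ?_, ?_, ?_, ?_⟩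
  · intro x hx
    obtain ⟨σ, -, rfl⟩ := (mem_L x).1 hx
    exact hc σ
  · intro η _ _
    have happ : ρ ++ [false] <+: τ η := hρ'.trans (hbase η)
    exact ⟨(List.prefix_append _ _).trans happ, ne_of_append_singleton_prefix happ⟩
  · intro η β hη hβ
    rw [shortLex_iff_shortlexKey_lt]
    exact hchain.prefix_and_ne_iff shortlexKey_injective.injOn hη hβ
  · exact fun η hη => getD_length_of_append_singleton_prefix (hchain.append_prefix_rhoTilde hη) _
  · exact fun η hη => lengthsOn_properPrefixes τ η ▸ hcolor η hη
  · intro Q hQ σ hσ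
    refine color_mem_L (prefix_flipStr (fun q hq => ?_) ((prefix_rhoTilde hbase L).trans hσ))
    obtain ⟨η, -, rfl⟩ := hQ q hq
    exact (hbase η).length_le
end
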